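/- arXiv:1701.02616 — 3 statements merged into one kernel-verified Lean document; each statement's English description precedes it below -/
import Mathlib

section
/- Let z₀ ∈ ℂ, r > 0, and let f : ℂ → ℝ be C¹ on an open neighborhood of the closed disc D(z₀,r) with |∇f| integrable over D(z₀,r). Then (∬_{D(z₀,r)} |f(z) − f_{D(z₀,r)}|² dxdy)^{1/2} ≤ (3√(π³)/4) · ∬_{D(z₀,r)} |∇f(z)| dxdy. -/
/-!
Since the mean value minimises the mean square deviation, the integral of `|f z - mean| ^ 2` over
the disc `D`, multiplied by the area of a smaller concentric disc `E`, is at most the integral of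
`|f z - f w| ^ 2` over `z ∈ D` and `w ∈ E`. Joining `z` to `w` along either pair of sides of the
coordinate rectangle with diagonal `zw` bounds `|f z - f w|` both by `row z + column w` and by
`column z + row w`, where `row` and `column` are the variations of `f` along the coordinate lines
through a point. In the product of these two bounds every term has two factors depending on
different real variables, so it integrates to products of `L¹` norms of partial derivatives.

The two paths stay in `D` unless `z` is close to one of the four points where the coordinate axes
meet the boundary circle; if `E` is small, such `z` are taken care of by the frame rotated by
`π / 4`. If the radius of `E` is `3 / 8` of that of `D`, the squared inequality holds with constant
`73 / 9 + 64 / (3 * π)`, which is less than `(3 * √(π ^ 3) / 4) ^ 2`.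
-/

open MeasureTheory Metric Real
open scoped ENNReal

section Corner

variable {X Y : Type*} [MeasurableSpace X] [MeasurableSpace Y]
  {μ : Measure X} {ν : Measure Y} [SFinite ν]

lemma setLIntegral_snd_mul_fst_le {A : Y → ℝ≥0∞} {B : X → ℝ≥0∞} (hA : Measurable A)
    (hB : Measurable B) (S : Set (X × Y)) :
    ∫⁻ p in S, A p.2 * B p.1 ∂(μ.prod ν) ≤ (∫⁻ y, A y ∂ν) * ∫⁻ x, B x ∂μ := by
  simp only [mul_comm (A _), mul_comm (∫⁻ y, A y ∂ν)]
  exact (setLIntegral_le_lintegral _ _).trans_eq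
    (lintegral_prod_mul hB.aemeasurable hA.aemeasurable)

variable [SFinite μ]

lemma setLIntegral_fst_le {g : X → ℝ≥0∞} (hg : Measurable g) {S : Set (X × Y)} {t : Set Y}
    (hS : S ⊆ Prod.snd ⁻¹' t) :
    ∫⁻ p in S, g p.1 ∂(μ.prod ν) ≤ ν t * ∫⁻ x, g x ∂μ := by
  calc ∫⁻ p in S, g p.1 ∂(μ.prod ν)
      ≤ ∫⁻ p in Set.univ ×ˢ t, g p.1 * 1 ∂(μ.prod ν) := by
        simp only [mul_one]
        exact lintegral_mono_set fun p hp => ⟨Set.mem_univ _, hS hp⟩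
    _ = ν t * ∫⁻ x, g x ∂μ := by
        rw [← Measure.prod_restrict, Measure.restrict_univ,
          lintegral_prod_mul hg.aemeasurable aemeasurable_const, setLIntegral_one, mul_comm]

lemma setLIntegral_snd_le {g : Y → ℝ≥0∞} (hg : Measurable g) {S : Set (X × Y)} {s : Set X}
    (hS : S ⊆ Prod.fst ⁻¹' s) :
    ∫⁻ p in S, g p.2 ∂(μ.prod ν) ≤ μ s * ∫⁻ y, g y ∂ν := by
  calc ∫⁻ p in S, g p.2 ∂(μ.prod ν)
      ≤ ∫⁻ p in s ×ˢ Set.univ, 1 * g p.2 ∂(μ.prod ν) := by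
        simp only [one_mul]
        exact lintegral_mono_set fun p hp => ⟨hS hp, Set.mem_univ _⟩
    _ = μ s * ∫⁻ y, g y ∂ν := by
        rw [← Measure.prod_restrict, Measure.restrict_univ,
          lintegral_prod_mul aemeasurable_const hg.aemeasurable, setLIntegral_one]

lemma lintegral_lintegral_corner_product_le {A : Y → ℝ≥0∞} {B : X → ℝ≥0∞}
    (hA : Measurable A) (hB : Measurable B) {S T : Set (X × Y)} {s s' : Set X} {t t' : Set Y}
    (hSst : S ⊆ s ×ˢ t) (hTst : T ⊆ s' ×ˢ t') :
    ∫⁻ q in T, ∫⁻ p in S, (A p.2 + B q.1) * (B p.1 + A q.2) ∂(μ.prod ν) ∂(μ.prod ν) ≤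
      (μ.prod ν T + μ.prod ν S) * ((∫⁻ y, A y ∂ν) * ∫⁻ x, B x ∂μ) +
        (μ s * μ s' * (∫⁻ y, A y ∂ν) ^ 2 + ν t * ν t' * (∫⁻ x, B x ∂μ) ^ 2) := by
  set m := μ.prod ν
  calc ∫⁻ q in T, ∫⁻ p in S, (A p.2 + B q.1) * (B p.1 + A q.2) ∂m ∂m
      = ∫⁻ q in T, ∫⁻ p in S, (A p.2 * B p.1 + A q.2 * A p.2 + B q.1 * B p.1
          + A q.2 * B q.1) ∂m ∂m :=
        lintegral_congr fun q => lintegral_congr fun p => by ring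
    _ = ∫⁻ q in T, (∫⁻ p in S, A p.2 * B p.1 ∂m) + (∫⁻ p in S, A p.2 ∂m) * A q.2
          + (∫⁻ p in S, B p.1 ∂m) * B q.1 + m S * (A q.2 * B q.1) ∂m := by
        refine lintegral_congr fun q => ?_
        rw [lintegral_add_right _ measurable_const, lintegral_add_right _ (by fun_prop),
          lintegral_add_right _ (by fun_prop), lintegral_const_mul _ (by fun_prop),
          lintegral_const_mul _ (by fun_prop), setLIntegral_const]
        ring
    _ = m T * (∫⁻ p in S, A p.2 * B p.1 ∂m) + m S * (∫⁻ q in T, A q.2 * B q.1 ∂m)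
          + ((∫⁻ p in S, A p.2 ∂m) * (∫⁻ q in T, A q.2 ∂m)
            + (∫⁻ p in S, B p.1 ∂m) * (∫⁻ q in T, B q.1 ∂m)) := by
        rw [lintegral_add_right _ (by fun_prop), lintegral_add_right _ (by fun_prop),
          lintegral_add_right _ (by fun_prop), lintegral_const_mul _ (by fun_prop),
          lintegral_const_mul _ (by fun_prop), lintegral_const_mul _ (by fun_prop),
          setLIntegral_const]
        ring
    _ ≤ m T * ((∫⁻ y, A y ∂ν) * ∫⁻ x, B x ∂μ) + m S * ((∫⁻ y, A y ∂ν) * ∫⁻ x, B x ∂μ)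
          + ((μ s * ∫⁻ y, A y ∂ν) * (μ s' * ∫⁻ y, A y ∂ν)
            + (ν t * ∫⁻ x, B x ∂μ) * (ν t' * ∫⁻ x, B x ∂μ)) := by
        gcongr
        · exact setLIntegral_snd_mul_fst_le hA hB S
        · exact setLIntegral_snd_mul_fst_le hA hB T
        · exact setLIntegral_snd_le hA fun p hp => (hSst hp).1
        · exact setLIntegral_snd_le hA fun p hp => (hTst hp).1
        · exact setLIntegral_fst_le hB fun p hp => (hSst hp).2
        · exact setLIntegral_fst_le hB fun p hp => (hTst hp).2
    _ = _ := by ring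

lemma lintegral_lintegral_sq_le_of_corners {A : Y → ℝ≥0∞} {B : X → ℝ≥0∞}
    (hA : Measurable A) (hB : Measurable B) {S T : Set (X × Y)} (hS : MeasurableSet S)
    (hT : MeasurableSet T) {s s' : Set X} {t t' : Set Y} (hSst : S ⊆ s ×ˢ t)
    (hTst : T ⊆ s' ×ˢ t') {F : X × Y → X × Y → ℝ≥0∞}
    (hF₁ : ∀ p ∈ S, ∀ q ∈ T, F p q ≤ A p.2 + B q.1)
    (hF₂ : ∀ p ∈ S, ∀ q ∈ T, F p q ≤ B p.1 + A q.2) :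
    ∫⁻ q in T, ∫⁻ p in S, F p q ^ 2 ∂(μ.prod ν) ∂(μ.prod ν) ≤
      (μ.prod ν T + μ.prod ν S) * ((∫⁻ y, A y ∂ν) * ∫⁻ x, B x ∂μ) +
        (μ s * μ s' * (∫⁻ y, A y ∂ν) ^ 2 + ν t * ν t' * (∫⁻ x, B x ∂μ) ^ 2) :=
  (setLIntegral_mono' hT fun q hq => setLIntegral_mono' hS fun p hp =>
    (sq (F p q)).trans_le (mul_le_mul' (hF₁ p hp q hq) (hF₂ p hp q hq))).trans
    (lintegral_lintegral_corner_product_le hA hB hSst hTst)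

end Corner

section Mean

variable {X H : Type*} [MeasurableSpace X] {μ : Measure X} [NormedAddCommGroup H]

lemma lintegral_enorm_sq_eq_ofReal {g : X → H} (hg : MemLp g 2 μ) :
    ∫⁻ x, ‖g x‖ₑ ^ 2 ∂μ = ENNReal.ofReal (∫ x, ‖g x‖ ^ 2 ∂μ) := by
  simpa using (ofReal_integral_norm_eq_lintegral_enorm (hg.integrable_norm_pow two_ne_zero)).symm

variable [IsFiniteMeasure μ] [InnerProductSpace ℝ H] [CompleteSpace H]

lemma integral_norm_sub_average_sq_le {f : X → H} (hf : MemLp f 2 μ) (c : H) :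
    ∫ x, ‖f x - ⨍ y, f y ∂μ‖ ^ 2 ∂μ ≤ ∫ x, ‖f x - c‖ ^ 2 ∂μ := by
  set m := ⨍ y, f y ∂μ
  have hdev : MemLp (fun x => f x - m) 2 μ := hf.sub (memLp_const m)
  have hdev₁ : Integrable (fun x => f x - m) μ := hdev.integrable one_le_two
  have hcross : ∫ x, inner ℝ (m - c) (f x - m) ∂μ = 0 := by
    rw [integral_inner hdev₁, integral_sub_average, inner_zero_right]
  calc ∫ x, ‖f x - m‖ ^ 2 ∂μ
      ≤ ∫ x, ‖f x - m‖ ^ 2 ∂μ + 2 * ∫ x, inner ℝ (m - c) (f x - m) ∂μ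
          + ∫ _, ‖m - c‖ ^ 2 ∂μ := by
        rw [hcross, mul_zero, add_zero]
        exact le_add_of_nonneg_right (integral_nonneg fun _ => sq_nonneg _)
    _ = ∫ x, (‖f x - m‖ ^ 2 + 2 * inner ℝ (m - c) (f x - m) + ‖m - c‖ ^ 2) ∂μ := by
        have hsq : Integrable (fun x => ‖f x - m‖ ^ 2) μ := hdev.integrable_norm_pow two_ne_zero
        have hinner : Integrable (fun x => 2 * inner ℝ (m - c) (f x - m)) μ :=
          (hdev₁.const_inner _).const_mul 2
        rw [integral_add _ (integrable_const _), integral_add hsq hinner, integral_const_mul]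
        exact hsq.add hinner
    _ = ∫ x, ‖f x - c‖ ^ 2 ∂μ := by
        refine integral_congr_ae (ae_of_all _ fun x => ?_)
        simp only
        rw [real_inner_comm, ← norm_add_sq_real, sub_add_sub_cancel]

lemma lintegral_enorm_sub_average_sq_le {f : X → H} (hf : AEStronglyMeasurable f μ) (c : H) :
    ∫⁻ x, ‖f x - ⨍ y, f y ∂μ‖ₑ ^ 2 ∂μ ≤ ∫⁻ x, ‖f x - c‖ₑ ^ 2 ∂μ := by
  by_cases hfin : ∫⁻ x, ‖f x - c‖ₑ ^ 2 ∂μ = ∞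
  · exact hfin ▸ le_top
  have hfc : MemLp (fun x => f x - c) 2 μ := by
    refine (memLp_two_iff_integrable_sq_norm (hf.sub aestronglyMeasurable_const)).2
      ⟨by fun_prop, ?_⟩
    simpa [HasFiniteIntegral, lt_top_iff_ne_top] using hfin
  have hfm : MemLp f 2 μ := by
    have := hfc.add (memLp_const c)
    rwa [show ((fun x => f x - c) + fun _ => c) = f by ext; simp] at this
  calc ∫⁻ x, ‖f x - ⨍ y, f y ∂μ‖ₑ ^ 2 ∂μ
      = ENNReal.ofReal (∫ x, ‖f x - ⨍ y, f y ∂μ‖ ^ 2 ∂μ) :=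
        lintegral_enorm_sq_eq_ofReal (hfm.sub (memLp_const _))
    _ ≤ ENNReal.ofReal (∫ x, ‖f x - c‖ ^ 2 ∂μ) :=
        ENNReal.ofReal_le_ofReal (integral_norm_sub_average_sq_le hfm c)
    _ = ∫⁻ x, ‖f x - c‖ₑ ^ 2 ∂μ := (lintegral_enorm_sq_eq_ofReal hfc).symm

end Mean

section Line

variable {E F : Type*} [NormedAddCommGroup E] [NormedSpace ℝ E] [NormedAddCommGroup F]
  [NormedSpace ℝ F]

lemma enorm_sub_le_lintegral_line {D : Set E} (hD : IsOpen D) (hconv : Convex ℝ D) {f : E → F}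
    (hf : ContDiffOn ℝ 1 f D) (p e : E) {s t : ℝ} (hs : p + s • e ∈ D) (ht : p + t • e ∈ D) :
    ‖f (p + t • e) - f (p + s • e)‖ₑ ≤
      ∫⁻ τ : ℝ, D.indicator (fun z => ‖fderiv ℝ f z e‖ₑ) (p + τ • e) := by
  wlog hst : s ≤ t generalizing s t
  · rw [enorm_sub_rev]
    exact this ht hs (le_of_not_ge hst)
  let ℓ : ℝ → E := fun τ => p + τ • e
  have hmem : ∀ τ ∈ Set.Icc s t, ℓ τ ∈ D := by
    have hpre : Convex ℝ (ℓ ⁻¹' D) := by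
      have hline : ℓ = AffineMap.lineMap p (p + e) := by
        ext τ
        simp [ℓ, AffineMap.lineMap_apply, add_comm]
      exact hline ▸ hconv.affine_preimage _
    exact fun τ hτ => hpre.ordConnected.out hs ht hτ
  have hderiv : ∀ τ ∈ Set.Icc s t, deriv (f ∘ ℓ) τ = fderiv ℝ f (ℓ τ) e := fun τ hτ => by
    have hℓ : HasDerivAt ℓ e τ := by
      simpa only [one_smul, id] using ((hasDerivAt_id τ).smul_const e).const_add p
    have hfd := (hf.differentiableOn one_ne_zero).differentiableAt (hD.mem_nhds (hmem τ hτ))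
    exact (hfd.hasFDerivAt.comp_hasDerivAt τ hℓ).deriv
  calc ‖f (ℓ t) - f (ℓ s)‖ₑ
      ≤ ∫⁻ τ in Set.Icc s t, ‖deriv (f ∘ ℓ) τ‖ₑ :=
        enorm_sub_le_lintegral_deriv_of_contDiffOn_Icc
          (hf.comp (by fun_prop) hmem) hst
    _ = ∫⁻ τ in Set.Icc s t, D.indicator (fun z => ‖fderiv ℝ f z e‖ₑ) (ℓ τ) := by
        refine setLIntegral_congr_fun measurableSet_Icc fun τ hτ => ?_
        simp only [hderiv τ hτ, Set.indicator_of_mem (hmem τ hτ)]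
    _ ≤ _ := setLIntegral_le_lintegral _ _

end Line

section Frame

lemma sqrt_sq_apply_add_sq_apply_mul_I_le (L : ℂ →L[ℝ] ℝ) (ω : Circle) :
    √(L ω ^ 2 + L (ω * Complex.I) ^ 2) ≤ ‖L‖ := by
  set a := L ω
  set b := L (ω * Complex.I)
  rcases (sqrt_nonneg (a ^ 2 + b ^ 2)).eq_or_lt with hzero | hpos
  · exact hzero ▸ norm_nonneg L
  refine le_of_mul_le_mul_right ?_ hpos
  have hv : L (ω * (a + b * Complex.I)) = a ^ 2 + b ^ 2 := by
    have : (ω : ℂ) * (a + b * Complex.I) = a • (ω : ℂ) + b • (ω * Complex.I) := by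
      simp only [Complex.real_smul]
      ring
    rw [this, map_add, map_smul, map_smul, smul_eq_mul, smul_eq_mul, sq, sq]
  calc √(a ^ 2 + b ^ 2) * √(a ^ 2 + b ^ 2) = L (ω * (a + b * Complex.I)) := by
        rw [mul_self_sqrt (by positivity), hv]
    _ ≤ ‖L‖ * ‖(ω : ℂ) * (a + b * Complex.I)‖ := (le_abs_self _).trans (L.le_opNorm _)
    _ = ‖L‖ * √(a ^ 2 + b ^ 2) := by
        rw [norm_mul, Circle.norm_coe, one_mul, Complex.norm_add_mul_I]

lemma sq_integral_add_sq_integral_le {X : Type*} [MeasurableSpace X] {μ : Measure X}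
    {u v : X → ℝ} (hu : Integrable u μ) (hv : Integrable v μ) :
    (∫ x, u x ∂μ) ^ 2 + (∫ x, v x ∂μ) ^ 2 ≤ (∫ x, √(u x ^ 2 + v x ^ 2) ∂μ) ^ 2 := by
  have h := norm_integral_le_integral_norm (μ := μ) fun x => (u x + v x * Complex.I : ℂ)
  rw [integral_add hu.ofReal (hv.ofReal.mul_const _), integral_mul_const,
    integral_complex_ofReal, integral_complex_ofReal] at h
  simp only [Complex.norm_add_mul_I] at h
  exact (sqrt_le_left (integral_nonneg fun _ => sqrt_nonneg _)).1 h

lemma sq_lintegral_add_sq_lintegral_le {X : Type*} [MeasurableSpace X] {μ : Measure X}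
    {L : X → ℂ →L[ℝ] ℝ} (hL : AEStronglyMeasurable L μ) (ω : Circle) :
    (∫⁻ x, ‖L x ω‖ₑ ∂μ) ^ 2 + (∫⁻ x, ‖L x (ω * Complex.I)‖ₑ ∂μ) ^ 2 ≤
      (∫⁻ x, ‖L x‖ₑ ∂μ) ^ 2 := by
  by_cases hfin : ∫⁻ x, ‖L x‖ₑ ∂μ = ∞
  · simp [hfin]
  have hLi : Integrable L μ := ⟨hL, lt_top_iff_ne_top.2 hfin⟩
  have happly (v : ℂ) : Integrable (fun x => L x v) μ := hLi.apply_continuousLinearMap v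
  rw [← ofReal_integral_norm_eq_lintegral_enorm hLi,
    ← ofReal_integral_norm_eq_lintegral_enorm (happly _),
    ← ofReal_integral_norm_eq_lintegral_enorm (happly _), ← ENNReal.ofReal_pow (by positivity),
    ← ENNReal.ofReal_pow (by positivity), ← ENNReal.ofReal_pow (by positivity),
    ← ENNReal.ofReal_add (by positivity) (by positivity)]
  refine ENNReal.ofReal_le_ofReal <|
    (sq_integral_add_sq_integral_le (happly _).norm (happly _).norm).trans ?_
  simp only [norm_eq_abs, sq_abs]
  gcongr ?_ ^ 2
  exact integral_mono_of_nonneg (ae_of_all _ fun _ => sqrt_nonneg _) hLi.norm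
    (ae_of_all _ fun x => sqrt_sq_apply_add_sq_apply_mul_I_le (L x) ω)

lemma ennreal_two_mul_le_add_sq (a b : ℝ≥0∞) : 2 * (a * b) ≤ a ^ 2 + b ^ 2 := by
  by_cases ha : a = ∞
  · simp [ha]
  by_cases hb : b = ∞
  · simp [hb]
  lift a to NNReal using ha
  lift b to NNReal using hb
  rw [← mul_assoc]
  exact_mod_cast two_mul_le_add_sq a b

/-- Cartesian coordinates with origin `z₀` and axes along `ω` and `ω * I`, as a measurable
equivalence `(x, y) ↦ z₀ + ω * (x + y * I)`. -/
noncomputable def cartesianFrame (z₀ : ℂ) (ω : Circle) : ℝ × ℝ ≃ᵐ ℂ :=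
  (Complex.measurableEquivRealProd.symm.trans (rotation ω).toHomeomorph.toMeasurableEquiv).trans
    (MeasurableEquiv.addLeft z₀)

variable (z₀ : ℂ) (ω : Circle)

lemma cartesianFrame_apply (p : ℝ × ℝ) :
    cartesianFrame z₀ ω p = z₀ + ω * (p.1 + p.2 * Complex.I) := by
  rw [← Complex.mk_eq_add_mul_I]
  rfl

lemma measurePreserving_cartesianFrame : MeasurePreserving (cartesianFrame z₀ ω) :=
  (measurePreserving_add_left volume z₀).comp <|
    (rotation ω).measurePreserving.comp Complex.volume_preserving_equiv_real_prod.symm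

lemma cartesianFrame_mem_ball {r : ℝ} (hr : 0 ≤ r) {p : ℝ × ℝ} :
    cartesianFrame z₀ ω p ∈ ball z₀ r ↔ p.1 ^ 2 + p.2 ^ 2 < r ^ 2 := by
  rw [cartesianFrame_apply, mem_ball_iff_norm, add_sub_cancel_left, norm_mul, Circle.norm_coe,
    one_mul, Complex.norm_add_mul_I, sqrt_lt (by positivity) hr]

/-- The variation of `f` along the part in `D` of the row at height `y` of the frame `(z₀, ω)`. -/
noncomputable def rowVariation (D : Set ℂ) (f : ℂ → ℝ) (y : ℝ) : ℝ≥0∞ :=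
  ∫⁻ x, D.indicator (fun z => ‖fderiv ℝ f z ω‖ₑ) (cartesianFrame z₀ ω (x, y))

/-- The variation of `f` along the part in `D` of the column at abscissa `x` of the frame
`(z₀, ω)`. -/
noncomputable def columnVariation (D : Set ℂ) (f : ℂ → ℝ) (x : ℝ) : ℝ≥0∞ :=
  ∫⁻ y, D.indicator (fun z => ‖fderiv ℝ f z (ω * Complex.I)‖ₑ) (cartesianFrame z₀ ω (x, y))

variable {z₀ ω}

lemma measurable_indicator_enorm_fderiv_apply {D : Set ℂ} (hD : MeasurableSet D) (f : ℂ → ℝ)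
    (v : ℂ) : Measurable (D.indicator fun z => ‖fderiv ℝ f z v‖ₑ) :=
  (measurable_fderiv_apply_const ℝ f v).enorm.indicator hD

lemma measurable_rowVariation {D : Set ℂ} (hD : MeasurableSet D) (f : ℂ → ℝ) :
    Measurable (rowVariation z₀ ω D f) :=
  ((measurable_indicator_enorm_fderiv_apply hD f _).comp
    (cartesianFrame z₀ ω).measurable).lintegral_prod_left'

lemma measurable_columnVariation {D : Set ℂ} (hD : MeasurableSet D) (f : ℂ → ℝ) :
    Measurable (columnVariation z₀ ω D f) :=
  ((measurable_indicator_enorm_fderiv_apply hD f _).comp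
    (cartesianFrame z₀ ω).measurable).lintegral_prod_right'

lemma lintegral_rowVariation {D : Set ℂ} (hD : MeasurableSet D) (f : ℂ → ℝ) :
    ∫⁻ y, rowVariation z₀ ω D f y = ∫⁻ z in D, ‖fderiv ℝ f z ω‖ₑ := by
  have hmeas := measurable_indicator_enorm_fderiv_apply hD f ω
  rw [← lintegral_indicator hD, ← (measurePreserving_cartesianFrame z₀ ω).lintegral_comp hmeas,
    Measure.volume_eq_prod]
  exact (lintegral_prod_symm' _ (hmeas.comp (cartesianFrame z₀ ω).measurable)).symm

lemma lintegral_columnVariation {D : Set ℂ} (hD : MeasurableSet D) (f : ℂ → ℝ) :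
    ∫⁻ x, columnVariation z₀ ω D f x = ∫⁻ z in D, ‖fderiv ℝ f z (ω * Complex.I)‖ₑ := by
  have hmeas := measurable_indicator_enorm_fderiv_apply hD f (ω * Complex.I)
  rw [← lintegral_indicator hD, ← (measurePreserving_cartesianFrame z₀ ω).lintegral_comp hmeas,
    Measure.volume_eq_prod]
  exact (lintegral_prod _ (hmeas.comp (cartesianFrame z₀ ω).measurable).aemeasurable).symm

variable {D : Set ℂ} {f : ℂ → ℝ}

lemma enorm_sub_le_rowVariation (hD : IsOpen D) (hconv : Convex ℝ D) (hf : ContDiffOn ℝ 1 f D)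
    {x x' y : ℝ} (hx : cartesianFrame z₀ ω (x, y) ∈ D) (hx' : cartesianFrame z₀ ω (x', y) ∈ D) :
    ‖f (cartesianFrame z₀ ω (x, y)) - f (cartesianFrame z₀ ω (x', y))‖ₑ ≤
      rowVariation z₀ ω D f y := by
  have hline (s : ℝ) :
      cartesianFrame z₀ ω (s, y) = z₀ + ω * (y * Complex.I) + s • (ω : ℂ) := by
    rw [cartesianFrame_apply, Complex.real_smul]
    ring
  simp only [rowVariation, hline] at hx hx' ⊢
  exact enorm_sub_le_lintegral_line hD hconv hf _ _ hx' hx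

lemma enorm_sub_le_columnVariation (hD : IsOpen D) (hconv : Convex ℝ D) (hf : ContDiffOn ℝ 1 f D)
    {x y y' : ℝ} (hy : cartesianFrame z₀ ω (x, y) ∈ D) (hy' : cartesianFrame z₀ ω (x, y') ∈ D) :
    ‖f (cartesianFrame z₀ ω (x, y)) - f (cartesianFrame z₀ ω (x, y'))‖ₑ ≤
      columnVariation z₀ ω D f x := by
  have hline (s : ℝ) : cartesianFrame z₀ ω (x, s) = z₀ + ω * x + s • (ω * Complex.I) := by
    rw [cartesianFrame_apply, Complex.real_smul]
    ring
  simp only [columnVariation, hline] at hy hy' ⊢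
  exact enorm_sub_le_lintegral_line hD hconv hf _ _ hy' hy

lemma enorm_sub_le_row_add_column (hD : IsOpen D) (hconv : Convex ℝ D) (hf : ContDiffOn ℝ 1 f D)
    {p q : ℝ × ℝ} (hp : cartesianFrame z₀ ω p ∈ D) (hq : cartesianFrame z₀ ω q ∈ D)
    (hcorner : cartesianFrame z₀ ω (q.1, p.2) ∈ D) :
    ‖f (cartesianFrame z₀ ω p) - f (cartesianFrame z₀ ω q)‖ₑ ≤
      rowVariation z₀ ω D f p.2 + columnVariation z₀ ω D f q.1 := by
  rw [← sub_add_sub_cancel _ (f (cartesianFrame z₀ ω (q.1, p.2)))]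
  exact (enorm_add_le _ _).trans <| add_le_add
    (enorm_sub_le_rowVariation hD hconv hf hp hcorner)
    (enorm_sub_le_columnVariation hD hconv hf hcorner hq)

lemma lintegral_lintegral_enorm_sub_sq_le_of_corners (hD : IsOpen D) (hconv : Convex ℝ D)
    (hf : ContDiffOn ℝ 1 f D) {S T : Set (ℝ × ℝ)} (hS : MeasurableSet S) (hT : MeasurableSet T)
    {s t : Set ℝ} (hSs : S ⊆ s ×ˢ s) (hTt : T ⊆ t ×ˢ t)
    (hSD : ∀ p ∈ S, cartesianFrame z₀ ω p ∈ D) (hTD : ∀ q ∈ T, cartesianFrame z₀ ω q ∈ D)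
    (hcorner₁ : ∀ p ∈ S, ∀ q ∈ T, cartesianFrame z₀ ω (p.1, q.2) ∈ D)
    (hcorner₂ : ∀ p ∈ S, ∀ q ∈ T, cartesianFrame z₀ ω (q.1, p.2) ∈ D) :
    2 * ∫⁻ q in T, ∫⁻ p in S, ‖f (cartesianFrame z₀ ω p) - f (cartesianFrame z₀ ω q)‖ₑ ^ 2 ≤
      (volume T + volume S + 2 * (volume s * volume t)) *
        (∫⁻ z in D, ‖fderiv ℝ f z‖ₑ) ^ 2 := by
  set α := ∫⁻ y, rowVariation z₀ ω D f y with hα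
  set β := ∫⁻ x, columnVariation z₀ ω D f x with hβ
  set G := ∫⁻ z in D, ‖fderiv ℝ f z‖ₑ
  have hgrad : α ^ 2 + β ^ 2 ≤ G ^ 2 := by
    rw [hα, hβ, lintegral_rowVariation hD.measurableSet, lintegral_columnVariation hD.measurableSet]
    exact sq_lintegral_add_sq_lintegral_le (measurable_fderiv ℝ f).aestronglyMeasurable ω
  have hcorners := lintegral_lintegral_sq_le_of_corners (μ := volume) (ν := volume)
    (F := fun p q => ‖f (cartesianFrame z₀ ω p) - f (cartesianFrame z₀ ω q)‖ₑ)
    (measurable_rowVariation hD.measurableSet f) (measurable_columnVariation hD.measurableSet f)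
    hS hT hSs hTt
    (fun p hp q hq =>
      enorm_sub_le_row_add_column hD hconv hf (hSD p hp) (hTD q hq) (hcorner₂ p hp q hq))
    (fun p hp q hq => by
      rw [enorm_sub_rev, add_comm]
      exact enorm_sub_le_row_add_column hD hconv hf (hTD q hq) (hSD p hp) (hcorner₁ p hp q hq))
  calc 2 * ∫⁻ q in T, ∫⁻ p in S, ‖f (cartesianFrame z₀ ω p) - f (cartesianFrame z₀ ω q)‖ₑ ^ 2
      ≤ 2 * ((volume T + volume S) * (α * β) +
          (volume s * volume t * α ^ 2 + volume s * volume t * β ^ 2)) :=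
        mul_le_mul_right hcorners 2
    _ = (volume T + volume S) * (2 * (α * β)) +
          2 * (volume s * volume t) * (α ^ 2 + β ^ 2) := by ring
    _ ≤ (volume T + volume S) * G ^ 2 + 2 * (volume s * volume t) * G ^ 2 := by
        gcongr
        exact (ennreal_two_mul_le_add_sq α β).trans hgrad
    _ = _ := by ring

end Frame

section Disc

/-- The part of the disc of radius `r` about `0` in which the axis-parallel rectangle spanned by a
point and any point of the disc of radius `ρ` has all its corners in the disc of radius `r`. -/
def trimmedDisc (r ρ : ℝ) : Set (ℝ × ℝ) :=
  {p | p.1 ^ 2 + p.2 ^ 2 < r ^ 2 ∧ p.1 ^ 2 + ρ ^ 2 ≤ r ^ 2 ∧ p.2 ^ 2 + ρ ^ 2 ≤ r ^ 2}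

lemma measurableSet_trimmedDisc (r ρ : ℝ) : MeasurableSet (trimmedDisc r ρ) := by
  unfold trimmedDisc
  measurability

lemma volume_complex_ball (z : ℂ) {r : ℝ} (hr : 0 ≤ r) :
    volume (ball z r) = ENNReal.ofReal (π * r ^ 2) := by
  rw [Complex.volume_ball, ← ENNReal.ofReal_pow hr, mul_comm π, ENNReal.ofReal_mul (by positivity),
    ← NNReal.coe_real_pi, ENNReal.ofReal_coe_nnreal]

lemma preimage_cartesianFrame_ball (z₀ : ℂ) (ω : Circle) {r : ℝ} (hr : 0 ≤ r) :
    cartesianFrame z₀ ω ⁻¹' ball z₀ r = {p | p.1 ^ 2 + p.2 ^ 2 < r ^ 2} :=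
  Set.ext fun _ => cartesianFrame_mem_ball z₀ ω hr

lemma volume_setOf_sq_add_sq_lt {r : ℝ} (hr : 0 ≤ r) :
    volume {p : ℝ × ℝ | p.1 ^ 2 + p.2 ^ 2 < r ^ 2} = ENNReal.ofReal (π * r ^ 2) := by
  rw [← preimage_cartesianFrame_ball 0 1 hr, (measurePreserving_cartesianFrame 0 1).measure_preimage
    measurableSet_ball.nullMeasurableSet, volume_complex_ball 0 hr]

lemma setOf_sq_add_sq_lt_subset {r : ℝ} (hr : 0 ≤ r) :
    {p : ℝ × ℝ | p.1 ^ 2 + p.2 ^ 2 < r ^ 2} ⊆ Set.Icc (-r) r ×ˢ Set.Icc (-r) r := fun p hp =>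
  ⟨abs_le.1 (abs_le_of_sq_le_sq (by nlinarith [sq_nonneg p.2, hp.out]) hr),
    abs_le.1 (abs_le_of_sq_le_sq (by nlinarith [sq_nonneg p.1, hp.out]) hr)⟩

lemma trimmedDisc_subset (r ρ : ℝ) : trimmedDisc r ρ ⊆ {p | p.1 ^ 2 + p.2 ^ 2 < r ^ 2} :=
  fun _ hp => hp.1

lemma volume_add_volume_trimmedDisc_le {r ρ : ℝ} (hr : 0 ≤ r) (hρ : 0 ≤ ρ) :
    volume {p : ℝ × ℝ | p.1 ^ 2 + p.2 ^ 2 < ρ ^ 2} + volume (trimmedDisc r ρ) +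
        2 * (volume (Set.Icc (-r) r) * volume (Set.Icc (-ρ) ρ)) ≤
      ENNReal.ofReal (π * (r ^ 2 + ρ ^ 2) + 8 * r * ρ) := by
  calc _ ≤ ENNReal.ofReal (π * ρ ^ 2) + ENNReal.ofReal (π * r ^ 2) +
        ENNReal.ofReal 2 * (ENNReal.ofReal (r - -r) * ENNReal.ofReal (ρ - -ρ)) := by
        rw [volume_setOf_sq_add_sq_lt hρ, Real.volume_Icc, Real.volume_Icc, ENNReal.ofReal_ofNat]
        gcongr
        exact (measure_mono (trimmedDisc_subset r ρ)).trans_eq (volume_setOf_sq_add_sq_lt hr)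
    _ = _ := by
        rw [← ENNReal.ofReal_mul (by linarith), ← ENNReal.ofReal_mul (by norm_num),
          ← ENNReal.ofReal_add (by positivity) (by positivity),
          ← ENNReal.ofReal_add (by positivity) (by nlinarith)]
        ring_nf

lemma lintegral_lintegral_trimmedDisc_le (z₀ : ℂ) (ω : Circle) {f : ℂ → ℝ} {r ρ : ℝ}
    (hρ : 0 ≤ ρ) (hρr : ρ ≤ r) (hf : ContDiffOn ℝ 1 f (ball z₀ r)) :
    2 * ∫⁻ w in ball z₀ ρ, ∫⁻ z in cartesianFrame z₀ ω '' trimmedDisc r ρ, ‖f z - f w‖ₑ ^ 2 ≤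
      ENNReal.ofReal (π * (r ^ 2 + ρ ^ 2) + 8 * r * ρ) *
        (∫⁻ z in ball z₀ r, ‖fderiv ℝ f z‖ₑ) ^ 2 := by
  have hr : 0 ≤ r := hρ.trans hρr
  have hmem {p : ℝ × ℝ} (hp : p.1 ^ 2 + p.2 ^ 2 < r ^ 2) : cartesianFrame z₀ ω p ∈ ball z₀ r :=
    (cartesianFrame_mem_ball z₀ ω hr).2 hp
  have hdisc : MeasurableSet {p : ℝ × ℝ | p.1 ^ 2 + p.2 ^ 2 < ρ ^ 2} := by measurability
  have hcoord := lintegral_lintegral_enorm_sub_sq_le_of_corners (z₀ := z₀) (ω := ω) isOpen_ball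
    (convex_ball z₀ r) hf (measurableSet_trimmedDisc r ρ) hdisc
    ((trimmedDisc_subset r ρ).trans (setOf_sq_add_sq_lt_subset hr)) (setOf_sq_add_sq_lt_subset hρ)
    (fun p hp => hmem hp.1)
    (fun q hq => hmem (by nlinarith [hq.out]))
    (fun p hp q hq => hmem (by nlinarith [hp.2.1, hq.out, sq_nonneg q.1]))
    (fun p hp q hq => hmem (by nlinarith [hp.2.2, hq.out, sq_nonneg q.2]))
  have hcov (s : Set ℂ) (g : ℂ → ℝ≥0∞) :=
    ((measurePreserving_cartesianFrame z₀ ω).setLIntegral_comp_preimage_emb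
      (cartesianFrame z₀ ω).measurableEmbedding g s).symm
  simp only [hcov (ball z₀ ρ), hcov (_ '' _), preimage_cartesianFrame_ball z₀ ω hρ,
    (cartesianFrame z₀ ω).injective.preimage_image]
  exact hcoord.trans (mul_le_mul_left (volume_add_volume_trimmedDisc_le hr hρ) _)

lemma circle_exp_pi_div_four : (Circle.exp (π / 4) : ℂ) = √2 / 2 + √2 / 2 * Complex.I := by
  rw [Circle.coe_exp, Complex.exp_mul_I, ← Complex.ofReal_cos, ← Complex.ofReal_sin,
    cos_pi_div_four, sin_pi_div_four]
  push_cast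
  rfl

lemma cartesianFrame_exp_pi_div_four (z₀ : ℂ) (x y : ℝ) :
    cartesianFrame z₀ (Circle.exp (π / 4)) (√2 / 2 * (x + y), √2 / 2 * (y - x)) =
      cartesianFrame z₀ 1 (x, y) := by
  have htwo : (√2 : ℂ) ^ 2 = 2 := mod_cast sq_sqrt zero_le_two
  simp only [cartesianFrame_apply, circle_exp_pi_div_four, Circle.coe_one]
  push_cast
  linear_combination
    (√2 ^ 2 / 4 * (y - x : ℂ)) * Complex.I_sq + (x + y * Complex.I : ℂ) / 2 * htwo

lemma abs_mul_le_of_le_sq_add_sq {x y r ρ : ℝ} (hxy : x ^ 2 + y ^ 2 ≤ r ^ 2)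
    (hx : r ^ 2 ≤ x ^ 2 + ρ ^ 2) (hρ : 0 ≤ ρ) (hρr : ρ ≤ 3 / 8 * r) :
    |x * y| ≤ r ^ 2 / 2 - ρ ^ 2 := by
  have hρr' : ρ ^ 2 ≤ 9 / 64 * r ^ 2 := by nlinarith
  have hy : y ^ 2 ≤ r ^ 2 - x ^ 2 := by linarith
  refine abs_le_of_sq_le_sq ?_ (by nlinarith)
  calc (x * y) ^ 2 = x ^ 2 * y ^ 2 := mul_pow x y 2
    _ ≤ x ^ 2 * (r ^ 2 - x ^ 2) := by gcongr
    _ ≤ (r ^ 2 - ρ ^ 2) * ρ ^ 2 := by nlinarith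
    _ ≤ (r ^ 2 / 2 - ρ ^ 2) ^ 2 := by nlinarith [sq_nonneg ρ]

lemma ball_subset_union_trimmedDisc (z₀ : ℂ) {r ρ : ℝ} (hr : 0 ≤ r) (hρ : 0 ≤ ρ)
    (hρr : ρ ≤ 3 / 8 * r) :
    ball z₀ r ⊆ cartesianFrame z₀ 1 '' trimmedDisc r ρ ∪
      cartesianFrame z₀ (Circle.exp (π / 4)) '' trimmedDisc r ρ := by
  intro z hz
  obtain ⟨⟨x, y⟩, rfl⟩ := (cartesianFrame z₀ 1).surjective z
  have hnorm : x ^ 2 + y ^ 2 < r ^ 2 := (cartesianFrame_mem_ball z₀ 1 hr).1 hz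
  by_cases hxy : x ^ 2 + ρ ^ 2 ≤ r ^ 2 ∧ y ^ 2 + ρ ^ 2 ≤ r ^ 2
  · exact .inl ⟨_, ⟨hnorm, hxy⟩, rfl⟩
  have hprod : |x * y| ≤ r ^ 2 / 2 - ρ ^ 2 := by
    rcases not_and_or.1 hxy with hx | hy
    · exact abs_mul_le_of_le_sq_add_sq hnorm.le (not_le.1 hx).le hρ hρr
    · rw [mul_comm]
      exact abs_mul_le_of_le_sq_add_sq (by linarith) (not_le.1 hy).le hρ hρr
  obtain ⟨hlow, hupp⟩ := abs_le.1 hprod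
  have htwo : √2 ^ 2 = 2 := sq_sqrt zero_le_two
  have hx' : (√2 / 2 * (x + y)) ^ 2 = (x ^ 2 + y ^ 2) / 2 + x * y := by
    linear_combination (x + y) ^ 2 / 4 * htwo
  have hy' : (√2 / 2 * (y - x)) ^ 2 = (x ^ 2 + y ^ 2) / 2 - x * y := by
    linear_combination (y - x) ^ 2 / 4 * htwo
  refine .inr ⟨(√2 / 2 * (x + y), √2 / 2 * (y - x)), ⟨?_, ?_, ?_⟩,
    cartesianFrame_exp_pi_div_four z₀ x y⟩ <;> dsimp only <;> linarith

lemma ofReal_mul_lintegral_enorm_sub_average_sq_le (z₀ : ℂ) {f : ℂ → ℝ} {r ρ : ℝ}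
    (hρ : 0 ≤ ρ) (hρr : ρ ≤ 3 / 8 * r) (hf : ContDiffOn ℝ 1 f (ball z₀ r)) :
    ENNReal.ofReal (π * ρ ^ 2) *
        ∫⁻ z in ball z₀ r, ‖f z - ⨍ w in ball z₀ r, f w‖ₑ ^ 2 ≤
      ENNReal.ofReal (π * (r ^ 2 + ρ ^ 2) + 8 * r * ρ) *
        (∫⁻ z in ball z₀ r, ‖fderiv ℝ f z‖ₑ) ^ 2 := by
  have hr : 0 ≤ r := by linarith
  have hρr' : ρ ≤ r := by linarith
  have hfm : AEStronglyMeasurable f (volume.restrict (ball z₀ r)) :=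
    hf.continuousOn.aestronglyMeasurable measurableSet_ball
  have : IsFiniteMeasure (volume.restrict (ball z₀ r)) :=
    isFiniteMeasure_restrict.2 measure_ball_lt_top.ne
  let S (ω : Circle) : Set ℂ := cartesianFrame z₀ ω '' trimmedDisc r ρ
  have hS (ω : Circle) : S ω ⊆ ball z₀ r := Set.image_subset_iff.2 fun p hp =>
    (cartesianFrame_mem_ball z₀ ω hr).2 hp.1
  have hmeas : AEMeasurable (fun w => ∫⁻ z in S 1, ‖f z - f w‖ₑ ^ 2)
      (volume.restrict (ball z₀ ρ)) := by
    have hfS := (hfm.mono_set (hS 1)).aemeasurable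
    have hfE := (hfm.mono_set (ball_subset_ball hρr')).aemeasurable
    exact ((hfS.comp_snd.sub hfE.comp_fst).enorm.pow_const 2).lintegral_prod_right'
  rw [← ENNReal.mul_le_mul_iff_right two_ne_zero ENNReal.ofNat_ne_top]
  calc 2 * (ENNReal.ofReal (π * ρ ^ 2) *
        ∫⁻ z in ball z₀ r, ‖f z - ⨍ w in ball z₀ r, f w‖ₑ ^ 2)
      = 2 * ∫⁻ _ in ball z₀ ρ, ∫⁻ z in ball z₀ r, ‖f z - ⨍ w in ball z₀ r, f w‖ₑ ^ 2 := by
        rw [setLIntegral_const, volume_complex_ball z₀ hρ, mul_comm (ENNReal.ofReal _)]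
    _ ≤ 2 * ∫⁻ w in ball z₀ ρ, ((∫⁻ z in S 1, ‖f z - f w‖ₑ ^ 2) +
          ∫⁻ z in S (Circle.exp (π / 4)), ‖f z - f w‖ₑ ^ 2) := by
        gcongr with w
        exact (lintegral_enorm_sub_average_sq_le hfm (f w)).trans <|
          (lintegral_mono_set (ball_subset_union_trimmedDisc z₀ hr hρ hρr)).trans
            (lintegral_union_le _ _ _)
    _ = (2 * ∫⁻ w in ball z₀ ρ, ∫⁻ z in S 1, ‖f z - f w‖ₑ ^ 2) +
          2 * ∫⁻ w in ball z₀ ρ, ∫⁻ z in S (Circle.exp (π / 4)), ‖f z - f w‖ₑ ^ 2 := by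
        rw [lintegral_add_left' hmeas, mul_add]
    _ ≤ _ := (add_le_add (lintegral_lintegral_trimmedDisc_le z₀ 1 hρ hρr' hf)
        (lintegral_lintegral_trimmedDisc_le z₀ _ hρ hρr' hf)).trans_eq (two_mul _).symm

lemma lintegral_enorm_sub_average_ball_sq_le (z₀ : ℂ) {f : ℂ → ℝ} {r : ℝ} (hr : 0 < r)
    (hf : ContDiffOn ℝ 1 f (ball z₀ r)) :
    ∫⁻ z in ball z₀ r, ‖f z - ⨍ w in ball z₀ r, f w‖ₑ ^ 2 ≤
      (ENNReal.ofReal (3 * √(π ^ 3) / 4) * ∫⁻ z in ball z₀ r, ‖fderiv ℝ f z‖ₑ) ^ 2 := by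
  have hρ : 0 < 3 / 8 * r := by positivity
  have harea : 0 < π * (3 / 8 * r) ^ 2 := by positivity
  have hconst : π * (r ^ 2 + (3 / 8 * r) ^ 2) + 8 * r * (3 / 8 * r) ≤
      π * (3 / 8 * r) ^ 2 * (3 * √(π ^ 3) / 4) ^ 2 := by
    have hsq : (3 * √(π ^ 3) / 4) ^ 2 = 9 / 16 * π ^ 3 := by
      rw [div_pow, mul_pow, sq_sqrt (by positivity)]
      ring
    have hcube : 3 ^ 3 ≤ π ^ 3 := pow_le_pow_left₀ zero_le_three pi_gt_three.le 3
    have hfactor : 73 * π + 192 ≤ 9 * π * (9 / 16 * π ^ 3) := by nlinarith [pi_gt_d2]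
    rw [hsq]
    linear_combination r ^ 2 / 64 * hfactor
  rw [← ENNReal.mul_le_mul_iff_right (ENNReal.ofReal_pos.2 harea).ne' ENNReal.ofReal_ne_top]
  calc _ ≤ ENNReal.ofReal (π * (r ^ 2 + (3 / 8 * r) ^ 2) + 8 * r * (3 / 8 * r)) *
        (∫⁻ z in ball z₀ r, ‖fderiv ℝ f z‖ₑ) ^ 2 :=
        ofReal_mul_lintegral_enorm_sub_average_sq_le z₀ hρ.le le_rfl hf
    _ ≤ ENNReal.ofReal (π * (3 / 8 * r) ^ 2 * (3 * √(π ^ 3) / 4) ^ 2) *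
        (∫⁻ z in ball z₀ r, ‖fderiv ℝ f z‖ₑ) ^ 2 := by gcongr
    _ = _ := by
        rw [ENNReal.ofReal_mul harea.le, ENNReal.ofReal_pow (by positivity),
          mul_pow (ENNReal.ofReal _), mul_assoc]

end Disc

theorem poincare_sobolev_critical_disc_general
    (z₀ : ℂ) {r : ℝ} (hr : 0 < r) {f : ℂ → ℝ} (hf : ContDiffOn ℝ 1 f (ball z₀ r))
    (hgrad : IntegrableOn (fun z => ‖fderiv ℝ f z‖) (ball z₀ r)) :
    (∫⁻ z in ball z₀ r, ENNReal.ofReal ((f z - ⨍ w in ball z₀ r, f w) ^ 2)) ^ (1 / 2 : ℝ) ≤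
      ENNReal.ofReal (3 * √(π ^ 3) / 4 * ∫ z in ball z₀ r, ‖fderiv ℝ f z‖) := by
  have hgrad' : IntegrableOn (fderiv ℝ f) (ball z₀ r) :=
    (integrable_norm_iff (measurable_fderiv ℝ f).aestronglyMeasurable).1 hgrad
  rw [ENNReal.ofReal_mul (by positivity), ofReal_integral_norm_eq_lintegral_enorm hgrad', one_div,
    ENNReal.rpow_inv_le_iff two_pos, ENNReal.rpow_two]
  refine le_of_eq_of_le (lintegral_congr fun z => ?_)
    (lintegral_enorm_sub_average_ball_sq_le z₀ hr hf)
  rw [← sq_abs, ENNReal.ofReal_pow (abs_nonneg _), Real.enorm_eq_ofReal_abs]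

/-- Poincaré–Sobolev inequality in the critical case p = 1, q = 2 on a disc:
for `f` of class `C¹` on a neighborhood of the closed disc `D(z₀,r)` with
integrable gradient norm, the `L²`-norm of `f` minus its mean value over the disc
is bounded by `(3√(π³)/4)` times the `L¹`-norm of the gradient. -/
theorem poincare_sobolev_critical_disc
    (z₀ : ℂ) (r : ℝ) (hr : 0 < r) (f : ℂ → ℝ)
    (U : Set ℂ) (hU : IsOpen U) (hUr : Metric.closedBall z₀ r ⊆ U)
    (hf : ContDiffOn ℝ 1 f U)
    (hgrad : IntegrableOn (fun z => ‖fderiv ℝ f z‖) (Metric.ball z₀ r)) :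
    (∫⁻ z in Metric.ball z₀ r,
        ENNReal.ofReal ((f z - ⨍ w in Metric.ball z₀ r, f w) ^ 2)) ^ (1/2 : ℝ)
      ≤ ENNReal.ofReal
          (3 * Real.sqrt (π ^ 3) / 4 * ∫ z in Metric.ball z₀ r, ‖fderiv ℝ f z‖) :=
  poincare_sobolev_critical_disc_general z₀ hr (hf.mono (ball_subset_closedBall.trans hUr)) hgrad
end

section
/- Let Ω, Ω′ ⊂ ℂ be planar domains and let φ : Ω → Ω′ be a C¹ K-quasiconformal homeomorphism. Then for every disc D(z₀,r) with D(z₀,2r) ⊂ Ω, the weak inverse Hölder inequality ((1/|D(z₀,r)|) ∬_{D(z₀,r)} ‖Dφ(z)‖² dxdy)^{1/2} ≤ (24π²K/|D(z₀,2r)|) ∬_{D(z₀,2r)} ‖Dφ(z)‖ dxdy holds. -/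
open MeasureTheory Metric Real
open scoped ENNReal NNReal

/-- A `C¹` `K`-quasiconformal homeomorphism of a planar domain `Ω` onto `Ω′`:
a `C¹` homeomorphism whose Jacobian determinant is everywhere positive on `Ω`
and whose differential satisfies `‖Dφ(z)‖² ≤ K·J(z,φ)` on `Ω`. -/
def IsC1QCHomeoOn (K : ℝ) (φ : ℂ → ℂ) (Ω Ω' : Set ℂ) : Prop :=
  IsOpen Ω ∧ IsConnected Ω ∧ IsOpen Ω' ∧ IsConnected Ω' ∧
  ContDiffOn ℝ 1 φ Ω ∧ Set.InjOn φ Ω ∧ φ '' Ω = Ω' ∧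
  ∀ z ∈ Ω, 0 < (fderiv ℝ φ z).det ∧ ‖fderiv ℝ φ z‖ ^ 2 ≤ K * (fderiv ℝ φ z).det

/-!
The argument is the length–area method. For `r < s < R` let `L s` be the integral of `‖Dφ‖` along
the circle of radius `s`; it bounds the diameter of the image of that circle. As `φ` is open, the
image of the closed disc of radius `s` has no larger diameter, so its area is at most `π * L s ^ 2`.
By quasiconformality and the change of variables formula this area controls the integral of
`‖Dφ‖ ^ 2` over the disc of radius `r`, so the root mean square there is at most `√K / r * L s`.
Integrating over `s` between `r` and `R` turns the right-hand side into an area integral, by polar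
coordinates.
-/

open Filter Set
open scoped Topology

section MaximumPrinciple

variable {X E : Type*} [TopologicalSpace X] [NormedAddCommGroup E] [NormedSpace ℝ E] [Nontrivial E]
  {f : X → E} {s : Set X}

theorem not_isLocalMax_dist (p x : E) : ¬ IsLocalMax (fun y ↦ dist y p) x := by
  intro hmax
  have hx : x ∈ interior (closedBall p (dist x p)) := mem_interior_iff_mem_nhds.2 hmax
  rw [interior_closedBall'] at hx
  exact lt_irrefl _ (mem_ball.1 hx)

theorem exists_mem_frontier_isMaxOn_dist_of_nhds_le_map (hs : IsCompact s) (hne : s.Nonempty)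
    (hf : ContinuousOn f s) (hopen : ∀ x ∈ interior s, 𝓝 (f x) ≤ map f (𝓝 x)) (p : E) :
    ∃ m ∈ frontier s, IsMaxOn (fun x ↦ dist (f x) p) s m := by
  obtain ⟨m, hm, hmax⟩ := hs.exists_isMaxOn hne
    (continuous_id.dist (continuous_const (y := p)) |>.comp_continuousOn hf)
  refine ⟨m, ⟨subset_closure hm, fun hint ↦ not_isLocalMax_dist p (f m) (hopen m hint ?_)⟩, hmax⟩
  exact hmax.isLocalMax (mem_interior_iff_mem_nhds.1 hint)

theorem ediam_image_le_ediam_image_frontier_of_nhds_le_map (hs : IsCompact s)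
    (hf : ContinuousOn f s) (hopen : ∀ x ∈ interior s, 𝓝 (f x) ≤ map f (𝓝 x)) :
    ediam (f '' s) ≤ ediam (f '' frontier s) := by
  refine ediam_image_le_iff.2 fun x hx y hy ↦ ?_
  obtain ⟨m, hm, hmax⟩ := exists_mem_frontier_isMaxOn_dist_of_nhds_le_map hs ⟨x, hx⟩ hf hopen (f y)
  obtain ⟨n, hn, hmax'⟩ := exists_mem_frontier_isMaxOn_dist_of_nhds_le_map hs ⟨x, hx⟩ hf hopen (f m)
  have hdist : dist (f x) (f y) ≤ dist (f n) (f m) :=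
    calc dist (f x) (f y) ≤ dist (f m) (f y) := hmax hx
      _ = dist (f y) (f m) := dist_comm _ _
      _ ≤ dist (f n) (f m) := hmax' hy
  calc edist (f x) (f y) ≤ edist (f n) (f m) := by
        simpa only [edist_dist] using ENNReal.ofReal_le_ofReal hdist
    _ ≤ ediam (f '' frontier s) :=
        edist_le_ediam_of_mem (mem_image_of_mem f hn) (mem_image_of_mem f hm)

end MaximumPrinciple

theorem map_nhds_eq_of_det_fderiv_ne_zero {E : Type*} [NormedAddCommGroup E] [NormedSpace ℝ E]
    [FiniteDimensional ℝ E] {f : E → E} {x : E} (hf : ContDiffAt ℝ 1 f x)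
    (hdet : (fderiv ℝ f x).det ≠ 0) : map f (𝓝 x) = 𝓝 (f x) := by
  have := FiniteDimensional.complete ℝ E
  refine (hf.hasStrictFDerivAt one_ne_zero).map_nhds_eq_of_surj ?_
  rw [← (fderiv ℝ f x).coe_toContinuousLinearEquivOfDetNeZero hdet]
  exact LinearEquiv.range _

section CircleLIntegral

/-- The integral of `g` with respect to arc length along the circle of centre `c` and radius `s`,
used to bound the length of the image of that circle. The angle ranges over `(-π, π)`, as in the
target of `Complex.polarCoord`; the value is `0` for `s ≤ 0`. -/
noncomputable def circleLIntegral (g : ℂ → ℝ≥0∞) (c : ℂ) (s : ℝ) : ℝ≥0∞ :=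
  ∫⁻ t in Ioo (-π) π, ENNReal.ofReal s * g (circleMap c s t)

theorem lintegral_comp_circleMap (g : ℂ → ℝ≥0∞) (c : ℂ) :
    ∫⁻ p in Ioi (0 : ℝ) ×ˢ Ioo (-π) π, ENNReal.ofReal p.1 * g (circleMap c p.1 p.2) =
      ∫⁻ z, g z := by
  have hpolar (p : ℝ × ℝ) : c + Complex.polarCoord.symm p = circleMap c p.1 p.2 := by
    rw [Complex.polarCoord_symm_apply, circleMap, Complex.exp_mul_I, Complex.ofReal_cos,
      Complex.ofReal_sin]
  simpa only [polarCoord_target, smul_eq_mul, hpolar, lintegral_add_left_eq_self] using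
    Complex.lintegral_comp_polarCoord_symm fun z ↦ g (c + z)

theorem lintegral_circleLIntegral_Ioo_zero {g : ℂ → ℝ≥0∞} (hg : Measurable g) (c : ℂ) (R : ℝ) :
    ∫⁻ s in Ioo 0 R, circleLIntegral g c s = ∫⁻ z in ball c R, g z := by
  have hcircle : Continuous fun p : ℝ × ℝ ↦ circleMap c p.1 p.2 := by
    unfold circleMap; fun_prop
  have hball {p : ℝ × ℝ} (hp : 0 < p.1) : circleMap c p.1 p.2 ∈ ball c R ↔ p.1 < R := by
    rw [mem_ball, dist_eq_norm, circleMap_sub_center, norm_circleMap_zero, abs_of_pos hp]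
  have hsector : Ioo 0 R ×ˢ Ioo (-π) π = Iio R ×ˢ univ ∩ Ioi 0 ×ˢ Ioo (-π) π := by
    rw [prod_inter_prod, univ_inter, Iio_inter_Ioi]
  calc ∫⁻ s in Ioo 0 R, circleLIntegral g c s
      = ∫⁻ p in Ioo 0 R ×ˢ Ioo (-π) π, ENNReal.ofReal p.1 * g (circleMap c p.1 p.2) :=
        (setLIntegral_prod _ (Measurable.aemeasurable (measurable_fst.ennreal_ofReal.mul
          (hg.comp hcircle.measurable)))).symm
    _ = ∫⁻ p in Ioi 0 ×ˢ Ioo (-π) π, (Iio R ×ˢ univ).indicator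
          (fun p ↦ ENNReal.ofReal p.1 * g (circleMap c p.1 p.2)) p := by
        rw [hsector, setLIntegral_indicator (measurableSet_Iio.prod .univ)]
    _ = ∫⁻ p in Ioi 0 ×ˢ Ioo (-π) π,
          ENNReal.ofReal p.1 * (ball c R).indicator g (circleMap c p.1 p.2) := by
        refine setLIntegral_congr_fun (measurableSet_Ioi.prod measurableSet_Ioo) fun p hp ↦ ?_
        simp only [indicator, mem_prod, mem_Iio, mem_univ, and_true, hball hp.1, mul_ite, mul_zero]
    _ = ∫⁻ z in ball c R, g z := by
        rw [lintegral_comp_circleMap, lintegral_indicator measurableSet_ball]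

variable {E : Type*} [NormedAddCommGroup E] [NormedSpace ℝ E] {f : ℂ → E} {c : ℂ} {s : ℝ}

theorem enorm_deriv_comp_circleMap_le (hs : 0 ≤ s) {t : ℝ}
    (hf : DifferentiableAt ℝ f (circleMap c s t)) :
    ‖deriv (fun t ↦ f (circleMap c s t)) t‖ₑ ≤
      ENNReal.ofReal s * ‖fderiv ℝ f (circleMap c s t)‖ₑ := by
  have hderiv := hf.hasFDerivAt.comp_hasDerivAt t (hasDerivAt_circleMap c s t)
  calc ‖deriv (fun t ↦ f (circleMap c s t)) t‖ₑ
      = ‖fderiv ℝ f (circleMap c s t) (circleMap 0 s t * Complex.I)‖ₑ :=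
        congrArg enorm hderiv.deriv
    _ ≤ ‖fderiv ℝ f (circleMap c s t)‖ₑ * ‖circleMap 0 s t * Complex.I‖ₑ :=
        ContinuousLinearMap.le_opENorm _ _
    _ = ENNReal.ofReal s * ‖fderiv ℝ f (circleMap c s t)‖ₑ := by
        rw [mul_comm, ← ofReal_norm (_ * Complex.I), norm_mul, norm_circleMap_zero,
          Complex.norm_I, mul_one, abs_of_nonneg hs]

theorem ediam_image_sphere_le_circleLIntegral (hs : 0 ≤ s)
    (hf : ∀ z ∈ sphere c s, ContDiffAt ℝ 1 f z) :
    ediam (f '' sphere c s) ≤ circleLIntegral (fun z ↦ ‖fderiv ℝ f z‖ₑ) c s := by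
  have hmem (t : ℝ) : circleMap c s t ∈ sphere c s := circleMap_mem_sphere c hs t
  have hCD : ContDiff ℝ 1 fun t ↦ f (circleMap c s t) :=
    contDiff_iff_contDiffAt.2 fun t ↦ (hf _ (hmem t)).comp t (contDiff_circleMap c s).contDiffAt
  have harc {a b : ℝ} (ha : -π ≤ a) (hb : b ≤ π) (hab : a ≤ b) :
      edist (f (circleMap c s b)) (f (circleMap c s a)) ≤
        circleLIntegral (fun z ↦ ‖fderiv ℝ f z‖ₑ) c s :=
    calc edist (f (circleMap c s b)) (f (circleMap c s a))
        = ‖f (circleMap c s b) - f (circleMap c s a)‖ₑ := edist_eq_enorm_sub _ _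
      _ ≤ ∫⁻ t in Icc a b, ‖deriv (fun t ↦ f (circleMap c s t)) t‖ₑ :=
        enorm_sub_le_lintegral_deriv_of_contDiffOn_Icc hCD.contDiffOn hab
      _ ≤ ∫⁻ t in Icc (-π) π, ‖deriv (fun t ↦ f (circleMap c s t)) t‖ₑ :=
        lintegral_mono_set (Icc_subset_Icc ha hb)
      _ ≤ circleLIntegral (fun z ↦ ‖fderiv ℝ f z‖ₑ) c s := by
        rw [← restrict_Ioo_eq_restrict_Icc]
        exact lintegral_mono fun t ↦ enorm_deriv_comp_circleMap_le hs
          ((hf _ (hmem t)).differentiableAt one_ne_zero)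
  have hparam : sphere c s = circleMap c s '' Ioc (-π) π := by
    have hrange := (periodic_circleMap c s).image_Ioc two_pi_pos (-π)
    rwa [range_circleMap, abs_of_nonneg hs, show -π + 2 * π = π by ring, eq_comm] at hrange
  rw [hparam, image_image]
  refine ediam_image_le_iff.2 fun a ha b hb ↦ ?_
  rcases le_total a b with hab | hba
  · rw [edist_comm]
    exact harc ha.1.le hb.2 hab
  · exact harc hb.1.le ha.2 hba

end CircleLIntegral

section Area

theorem volume_le_pi_mul_ediam_sq (s : Set ℂ) : volume s ≤ NNReal.pi * ediam s ^ 2 := by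
  rcases s.eq_empty_or_nonempty with rfl | ⟨p, hp⟩
  · simp
  by_cases htop : ediam s = ⊤
  · simp [htop, ENNReal.mul_top, NNReal.pi_ne_zero]
  have hsub : s ⊆ closedBall p (diam s) := fun x hx ↦
    dist_le_diam_of_mem' htop hx hp
  calc volume s ≤ volume (closedBall p (diam s)) := measure_mono hsub
    _ = NNReal.pi * ediam s ^ 2 := by
        rw [Complex.volume_closedBall, diam, ENNReal.ofReal_toReal htop, mul_comm]

theorem lintegral_enorm_pow_le_measure_image {E : Type*} [NormedAddCommGroup E] [NormedSpace ℝ E]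
    [FiniteDimensional ℝ E] [MeasurableSpace E] [BorelSpace E] (μ : Measure E) [μ.IsAddHaarMeasure]
    {f : E → E} {f' : E → E →L[ℝ] E} {s : Set E} {K : ℝ} {n : ℕ} (hs : MeasurableSet s)
    (hf' : ∀ x ∈ s, HasFDerivWithinAt f (f' x) s x) (hinj : InjOn f s)
    (hK : ∀ x ∈ s, ‖f' x‖ ^ n ≤ K * |(f' x).det|) :
    ∫⁻ x in s, ‖f' x‖ₑ ^ n ∂μ ≤ ENNReal.ofReal K * μ (f '' s) :=
  calc ∫⁻ x in s, ‖f' x‖ₑ ^ n ∂μ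
      ≤ ∫⁻ x in s, ENNReal.ofReal K * ENNReal.ofReal |(f' x).det| ∂μ := by
        refine setLIntegral_mono' hs fun x hx ↦ ?_
        rw [← ofReal_norm, ← ENNReal.ofReal_pow (norm_nonneg _),
          ← ENNReal.ofReal_mul' (abs_nonneg _)]
        exact ENNReal.ofReal_le_ofReal (hK x hx)
    _ = ENNReal.ofReal K * μ (f '' s) := by
        rw [lintegral_const_mul' _ _ ENNReal.ofReal_ne_top,
          lintegral_abs_det_fderiv_eq_addHaar_image μ hs hf' hinj]

end Area

section LengthArea

variable {φ : ℂ → ℂ} {c : ℂ} {K r s R : ℝ}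

theorem volume_image_closedBall_le_pi_mul_circleLIntegral_sq (hs : 0 ≤ s)
    (hφ : ∀ z ∈ closedBall c s, ContDiffAt ℝ 1 φ z)
    (hdet : ∀ z ∈ closedBall c s, (fderiv ℝ φ z).det ≠ 0) :
    volume (φ '' closedBall c s) ≤
      NNReal.pi * circleLIntegral (fun z ↦ ‖fderiv ℝ φ z‖ₑ) c s ^ 2 := by
  have hopen (z) (hz : z ∈ interior (closedBall c s)) : 𝓝 (φ z) ≤ map φ (𝓝 z) :=
    (map_nhds_eq_of_det_fderiv_ne_zero (hφ z (interior_subset hz)) (hdet z (interior_subset hz))).ge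
  have hdiam : ediam (φ '' closedBall c s) ≤ circleLIntegral (fun z ↦ ‖fderiv ℝ φ z‖ₑ) c s :=
    calc ediam (φ '' closedBall c s) ≤ ediam (φ '' frontier (closedBall c s)) :=
          ediam_image_le_ediam_image_frontier_of_nhds_le_map (isCompact_closedBall c s)
            (fun z hz ↦ (hφ z hz).continuousAt.continuousWithinAt) hopen
      _ = ediam (φ '' sphere c s) := by rw [frontier_closedBall']
      _ ≤ circleLIntegral (fun z ↦ ‖fderiv ℝ φ z‖ₑ) c s :=
          ediam_image_sphere_le_circleLIntegral hs fun z hz ↦ hφ z (sphere_subset_closedBall hz)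
  calc volume (φ '' closedBall c s) ≤ NNReal.pi * ediam (φ '' closedBall c s) ^ 2 :=
        volume_le_pi_mul_ediam_sq _
    _ ≤ NNReal.pi * circleLIntegral (fun z ↦ ‖fderiv ℝ φ z‖ₑ) c s ^ 2 := by gcongr

theorem rms_enorm_fderiv_ball_le_circleLIntegral (hr : 0 < r) (hrs : r ≤ s)
    (hφ : ∀ z ∈ closedBall c s, ContDiffAt ℝ 1 φ z) (hinj : InjOn φ (closedBall c s))
    (hdet : ∀ z ∈ closedBall c s, (fderiv ℝ φ z).det ≠ 0)
    (hK : ∀ z ∈ closedBall c s, ‖fderiv ℝ φ z‖ ^ 2 ≤ K * |(fderiv ℝ φ z).det|) :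
    ((volume (ball c r))⁻¹ * ∫⁻ z in ball c r, ‖fderiv ℝ φ z‖ₑ ^ 2) ^ (1 / 2 : ℝ) ≤
      ENNReal.ofReal (√K / r) * circleLIntegral (fun z ↦ ‖fderiv ℝ φ z‖ₑ) c s := by
  set L := circleLIntegral (fun z ↦ ‖fderiv ℝ φ z‖ₑ) c s
  have henergy : ∫⁻ z in ball c r, ‖fderiv ℝ φ z‖ₑ ^ 2 ≤
      ENNReal.ofReal K * (NNReal.pi * L ^ 2) :=
    calc ∫⁻ z in ball c r, ‖fderiv ℝ φ z‖ₑ ^ 2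
        ≤ ∫⁻ z in closedBall c s, ‖fderiv ℝ φ z‖ₑ ^ 2 :=
          lintegral_mono_set ((ball_subset_ball hrs).trans ball_subset_closedBall)
      _ ≤ ENNReal.ofReal K * volume (φ '' closedBall c s) :=
          lintegral_enorm_pow_le_measure_image volume measurableSet_closedBall
            (fun z hz ↦ ((hφ z hz).differentiableAt one_ne_zero).hasFDerivAt.hasFDerivWithinAt)
            hinj hK
      _ ≤ ENNReal.ofReal K * (NNReal.pi * L ^ 2) := by
          gcongr
          exact volume_image_closedBall_le_pi_mul_circleLIntegral_sq (hr.le.trans hrs) hφ hdet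
  have hscale : volume (ball c r) * (ENNReal.ofReal (√K / r) * L) ^ 2 =
      ENNReal.ofReal K * (NNReal.pi * L ^ 2) := by
    have hsq : ENNReal.ofReal r ^ 2 * ENNReal.ofReal (√K / r) ^ 2 = ENNReal.ofReal K := by
      rw [← mul_pow, ← ENNReal.ofReal_mul hr.le, mul_div_cancel₀ _ hr.ne',
        ← ENNReal.ofReal_pow (sqrt_nonneg K), sq_sqrt', ENNReal.ofReal_max, ENNReal.ofReal_zero,
        max_eq_left zero_le]
    rw [Complex.volume_ball, ← hsq]
    ring
  rw [one_div, ENNReal.rpow_inv_le_iff two_pos, ENNReal.rpow_two,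
    ENNReal.inv_mul_le_iff (measure_ball_pos volume c hr).ne' measure_ball_lt_top.ne, hscale]
  exact henergy

theorem weak_inverse_holder_inequality_general (hr : 0 < r) (hrR : r < R)
    (hφ : ContDiffOn ℝ 1 φ (ball c R)) (hinj : InjOn φ (ball c R))
    (hdet : ∀ z ∈ ball c R, (fderiv ℝ φ z).det ≠ 0)
    (hK : ∀ z ∈ ball c R, ‖fderiv ℝ φ z‖ ^ 2 ≤ K * |(fderiv ℝ φ z).det|) :
    ((volume (ball c r))⁻¹ * ∫⁻ z in ball c r, ‖fderiv ℝ φ z‖ₑ ^ 2) ^ (1 / 2 : ℝ) ≤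
      ENNReal.ofReal (√K / (r * (R - r))) * ∫⁻ z in ball c R, ‖fderiv ℝ φ z‖ₑ := by
  set M := ((volume (ball c r))⁻¹ * ∫⁻ z in ball c r, ‖fderiv ℝ φ z‖ₑ ^ 2) ^ (1 / 2 : ℝ)
  have hcircle (s) (hs : s ∈ Ioo r R) :
      M ≤ ENNReal.ofReal (√K / r) * circleLIntegral (fun z ↦ ‖fderiv ℝ φ z‖ₑ) c s := by
    have hsub : closedBall c s ⊆ ball c R := closedBall_subset_ball hs.2
    exact rms_enorm_fderiv_ball_le_circleLIntegral hr hs.1.le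
      (fun z hz ↦ hφ.contDiffAt (isOpen_ball.mem_nhds (hsub hz))) (hinj.mono hsub)
      (fun z hz ↦ hdet z (hsub hz)) (fun z hz ↦ hK z (hsub hz))
  have hmeas : Measurable fun z ↦ ‖fderiv ℝ φ z‖ₑ := (measurable_fderiv ℝ φ).enorm
  have hintegrated : M * ENNReal.ofReal (R - r) ≤
      ENNReal.ofReal (√K / r) * ∫⁻ z in ball c R, ‖fderiv ℝ φ z‖ₑ :=
    calc M * ENNReal.ofReal (R - r) = ∫⁻ _ in Ioo r R, M := by
          rw [setLIntegral_const, Real.volume_Ioo]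
      _ ≤ ∫⁻ s in Ioo r R,
            ENNReal.ofReal (√K / r) * circleLIntegral (fun z ↦ ‖fderiv ℝ φ z‖ₑ) c s :=
          setLIntegral_mono' measurableSet_Ioo hcircle
      _ = ENNReal.ofReal (√K / r) *
            ∫⁻ s in Ioo r R, circleLIntegral (fun z ↦ ‖fderiv ℝ φ z‖ₑ) c s :=
          lintegral_const_mul' _ _ ENNReal.ofReal_ne_top
      _ ≤ ENNReal.ofReal (√K / r) *
            ∫⁻ s in Ioo 0 R, circleLIntegral (fun z ↦ ‖fderiv ℝ φ z‖ₑ) c s := by gcongr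
      _ = ENNReal.ofReal (√K / r) * ∫⁻ z in ball c R, ‖fderiv ℝ φ z‖ₑ := by
          rw [lintegral_circleLIntegral_Ioo_zero hmeas]
  have hRr : 0 < R - r := sub_pos.2 hrR
  rw [← div_div, ENNReal.ofReal_div_of_pos hRr, ← ENNReal.mul_div_right_comm]
  exact (ENNReal.le_div_iff_mul_le (.inl (ENNReal.ofReal_pos.2 hRr).ne')
    (.inl ENNReal.ofReal_ne_top)).2 hintegrated

theorem ofReal_sqrt_div_le_mul_inv_volume_ball (hK : 1 ≤ K) (hr : 0 < r) :
    ENNReal.ofReal (√K / (r * (2 * r - r))) ≤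
      ENNReal.ofReal (24 * π ^ 2 * K) * (volume (ball c (2 * r)))⁻¹ := by
  have hvol : volume (ball c (2 * r)) = ENNReal.ofReal ((2 * r) ^ 2 * π) := by
    rw [Complex.volume_ball, ENNReal.ofReal_mul (sq_nonneg _), ENNReal.ofReal_pow (by positivity),
      ← NNReal.coe_real_pi, ENNReal.ofReal_coe_nnreal]
  have hsqrt : √K ≤ 6 * π * K :=
    calc √K ≤ K := sqrt_le_self_iff.2 (.inr hK)
      _ ≤ 6 * π * K := le_mul_of_one_le_left (by positivity) (by linarith [pi_gt_three])
  rw [hvol, ← ENNReal.ofReal_inv_of_pos (by positivity), ← ENNReal.ofReal_mul (by positivity)]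
  refine ENNReal.ofReal_le_ofReal ?_
  calc √K / (r * (2 * r - r)) = √K / r ^ 2 := by ring_nf
    _ ≤ 6 * π * K / r ^ 2 := by gcongr
    _ = 24 * π ^ 2 * K * ((2 * r) ^ 2 * π)⁻¹ := by field_simp; norm_num

end LengthArea

/-- Weak inverse Hölder inequality for derivatives of a `C¹` `K`-quasiconformal
homeomorphism `φ : Ω → Ω′`: for any disc `D(z₀,r)` with `D(z₀,2r) ⊂ Ω`,
`((1/|D(z₀,r)|)∬_{D(z₀,r)} ‖Dφ‖²)^{1/2} ≤ (24π²K/|D(z₀,2r)|)∬_{D(z₀,2r)} ‖Dφ‖`. -/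
theorem weak_inverse_holder_inequality
    (K : ℝ) (hK : 1 ≤ K) (Ω Ω' : Set ℂ) (φ : ℂ → ℂ)
    (hφ : IsC1QCHomeoOn K φ Ω Ω')
    (z₀ : ℂ) (r : ℝ) (hr : 0 < r) (hball : Metric.ball z₀ (2 * r) ⊆ Ω) :
    ((volume (Metric.ball z₀ r))⁻¹ *
        ∫⁻ z in Metric.ball z₀ r, (‖fderiv ℝ φ z‖₊ : ℝ≥0∞) ^ 2) ^ (1/2 : ℝ)
      ≤ ENNReal.ofReal (24 * π ^ 2 * K) * (volume (Metric.ball z₀ (2 * r)))⁻¹ *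
          ∫⁻ z in Metric.ball z₀ (2 * r), (‖fderiv ℝ φ z‖₊ : ℝ≥0∞) := by
  obtain ⟨-, -, -, -, hC1, hinj, -, hqc⟩ := hφ
  exact (weak_inverse_holder_inequality_general hr (by linarith) (hC1.mono hball) (hinj.mono hball)
    (fun z hz ↦ (hqc z (hball hz)).1.ne')
    (fun z hz ↦ (abs_of_pos (hqc z (hball hz)).1).symm ▸ (hqc z (hball hz)).2)).trans
    (mul_le_mul_left (ofReal_sqrt_div_le_mul_inv_volume_ball hK hr) _)
end

section
/- Let φ : ℂ → ℂ be a C¹ K-quasiconformal homeomorphism of ℂ onto itself. Then for every z₀ ∈ ℂ and every r > 0, the doubling inequality ∬_{D(z₀,2r)} J(z,φ) dxdy ≤ exp{Kπ²(2 + π⁴)²/(2 log 3)} · ∬_{D(z₀,r)} J(z,φ) dxdy holds; equivalently, |φ(D(z₀,2r))| ≤ exp{Kπ²(2 + π⁴)²/(2 log 3)}·|φ(D(z₀,r))|. -/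
open MeasureTheory Metric Real
open scoped ENNReal NNReal

/-- A `C¹` `K`-quasiconformal homeomorphism of `ℂ` onto itself: a `C¹`
bijection of the plane with everywhere positive Jacobian determinant satisfying
`‖Dφ(z)‖² ≤ K·J(z,φ)` everywhere. -/
def IsC1QCPlane (K : ℝ) (φ : ℂ → ℂ) : Prop :=
  ContDiff ℝ 1 φ ∧ Function.Bijective φ ∧
  ∀ z : ℂ, 0 < (fderiv ℝ φ z).det ∧ ‖fderiv ℝ φ z‖ ^ 2 ≤ K * (fderiv ℝ φ z).det

/-!
Quasi-invariance of the Dirichlet integral, `∬ |∇(u ∘ φ)|² ≤ K ∬ |∇u|²`, is played off against the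
Courant–Lebesgue length–area estimate. Let `|q - z₀| = 2 |p - z₀|`, and let `m`, `M` be the
distances from `w₀ = φ(z₀)` to `φ(p)` and `φ(q)`. There are a centre `c` and an interval of radii
`[a, b]`, with `b / a` bounded below, such that the circles about `c` with these radii separate
`z₀` from `p` and enclose `q`. Hence the image of each of them meets the disc `|w - w₀| ≤ m`,
which joins `φ(z₀)` to `φ(p)`, and the ray in `|w - w₀| ≥ M` which joins `φ(q)` to infinity. Along
such a circle `u ∘ φ`, where `u` is `log |w - w₀|` truncated at `m` and `M`, oscillates by about
`L = log (M / m)`, so that its Dirichlet integral is at least a constant times `L²`. It is also at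
most `K` times that of `u`, which is `2πL`. Thus `L ≲ K`, and comparing the images of the discs
`D(z₀, r)` and `D(z₀, 2r)` with discs about `w₀` gives the doubling of area.
-/

section Separation

variable {E F : Type*} [NormedAddCommGroup F] [NormedSpace ℝ F]

lemma exists_mem_sphere_dist_map_le_dist_map [PseudoMetricSpace E] (h : E ≃ₜ F) {x p c : E} {t : ℝ}
    (ht : t ∈ Set.uIcc (dist x c) (dist p c)) :
    ∃ z ∈ sphere c t, dist (h z) (h x) ≤ dist (h p) (h x) := by
  have preconnected_preimage : IsPreconnected (h ⁻¹' closedBall (h x) (dist (h p) (h x))) :=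
    h.isPreconnected_preimage.mpr (convex_closedBall _ _).isPreconnected
  have preconnected_dist := preconnected_preimage.image (dist · c) (by fun_prop)
  obtain ⟨z, hz, hzt⟩ := preconnected_dist.ordConnected.uIcc_subset
    ⟨x, by simp, rfl⟩ ⟨p, by simp, rfl⟩ ht
  exact ⟨z, hzt, hz⟩

lemma exists_mem_sphere_dist_le_dist_map [PseudoMetricSpace E] [ProperSpace E] (h : E ≃ₜ F)
    {q c : E} {w₀ : F} {t : ℝ} (hq : h q ≠ w₀) (ht : dist q c ≤ t) :
    ∃ z ∈ sphere c t, dist (h q) w₀ ≤ dist (h z) w₀ := by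
  -- The ray from `w₀` through `h q` pulls back, beyond `h q`, to a curve from `q` to infinity.
  let ray : ℝ → F := AffineMap.lineMap w₀ (h q)
  have dist_ray (s : ℝ) : dist (ray s) w₀ = |s| * dist (h q) w₀ := by
    rw [dist_lineMap_left, Real.norm_eq_abs, dist_comm w₀]
  have continuous_dist : Continuous fun s ↦ dist (h.symm (ray s)) c :=
    (h.symm.continuous.comp AffineMap.lineMap_continuous).dist continuous_const
  have ray_tendsto : Filter.Tendsto ray Filter.atTop (Filter.cocompact F) := by
    refine tendsto_cocompact_of_tendsto_dist_comp_atTop w₀ ?_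
    simp only [dist_ray]
    exact Filter.tendsto_abs_atTop_atTop.atTop_mul_const (dist_pos.mpr hq)
  have dist_tendsto : Filter.Tendsto (fun s ↦ dist (h.symm (ray s)) c) Filter.atTop Filter.atTop :=
    (tendsto_dist_right_cocompact_atTop c).comp
      (h.symm.isClosedEmbedding.tendsto_cocompact.comp ray_tendsto)
  obtain ⟨s, hs, hst⟩ := isPreconnected_Ici.intermediate_value_Ici (a := (1 : ℝ)) Set.self_mem_Ici
    (Filter.le_principal_iff.mpr (Filter.Ici_mem_atTop 1)) continuous_dist.continuousOn dist_tendsto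
    (show t ∈ Set.Ici (dist (h.symm (ray 1)) c) by simpa [ray] using ht)
  refine ⟨h.symm (ray s), hst, ?_⟩
  rw [h.apply_symm_apply, dist_ray]
  exact le_mul_of_one_le_left dist_nonneg ((Set.mem_Ici.mp hs).trans (le_abs_self s))

variable [NormedAddCommGroup E] [NormedSpace ℝ E] [ProperSpace E] [Nontrivial E]

lemma exists_mem_sphere_ball_subset_image_ball (h : E ≃ₜ F) (x : E) {r : ℝ} (hr : 0 ≤ r) :
    ∃ p ∈ sphere x r, ball (h x) (dist (h p) (h x)) ⊆ h '' ball x r := by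
  obtain ⟨p, hp, p_min⟩ := (isCompact_sphere x r).exists_isMinOn
    (NormedSpace.sphere_nonempty.mpr hr) (f := fun z ↦ dist (h z) (h x)) (by fun_prop)
  refine ⟨p, hp, fun w hw ↦ ⟨h.symm w, ?_, h.apply_symm_apply w⟩⟩
  by_contra hwr
  obtain ⟨z, hz, hzw⟩ := exists_mem_sphere_dist_map_le_dist_map h (x := x) (p := h.symm w) (c := x)
    (t := r) (Set.mem_uIcc_of_le (by simpa using hr) (not_lt.mp hwr))
  rw [h.apply_symm_apply] at hzw
  exact absurd (hzw.trans_lt hw) (not_lt.mpr (p_min hz))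

lemma exists_mem_sphere_image_closedBall_subset_closedBall (h : E ≃ₜ F) (x : E) {r : ℝ}
    (hr : 0 ≤ r) :
    ∃ q ∈ sphere x r, h '' closedBall x r ⊆ closedBall (h x) (dist (h q) (h x)) := by
  obtain ⟨p, hp, p_max⟩ := (isCompact_closedBall x r).exists_isMaxOn
    (nonempty_closedBall.mpr hr) (f := fun z ↦ dist (h z) (h x)) (by fun_prop)
  obtain ⟨q, hq, hpq⟩ : ∃ q ∈ sphere x r, dist (h p) (h x) ≤ dist (h q) (h x) := by
    by_cases hpx : h p = h x
    · obtain ⟨q, hq⟩ := NormedSpace.sphere_nonempty (x := x).mpr hr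
      exact ⟨q, hq, by simp [hpx]⟩
    · exact exists_mem_sphere_dist_le_dist_map h hpx hp
  exact ⟨q, hq, Set.image_subset_iff.mpr fun z hz ↦ (p_max hz).trans hpq⟩

end Separation

section Geometry

variable {E : Type*} [NormedAddCommGroup E] [InnerProductSpace ℝ E]

lemma norm_sub_smul_sq (p q : E) (l : ℝ) :
    ‖p - l • q‖ ^ 2 = ‖p‖ ^ 2 - 2 * l * inner ℝ p q + l ^ 2 * ‖q‖ ^ 2 := by
  rw [norm_sub_sq_real, real_inner_smul_right, norm_smul, mul_pow, Real.norm_eq_abs, sq_abs]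
  ring

lemma exists_center_of_norm_eq_two_mul_norm {p q : E} (hp : p ≠ 0) (hq : ‖q‖ = 2 * ‖p‖) :
    ∃ (c : E) (a b : ℝ), 0 < a ∧ 0 < b ∧ ‖q - c‖ ≤ a ∧ 16 * a ^ 2 ≤ 15 * b ^ 2 ∧
      Set.Icc a b ⊆ Set.uIcc ‖c‖ ‖p - c‖ := by
  have hp_pos : 0 < ‖p‖ := norm_pos_iff.mpr hp
  have norm_center {l : ℝ} (hl : 0 ≤ l) : ‖l • q‖ = 2 * l * ‖p‖ := by
    rw [norm_smul, Real.norm_of_nonneg hl, hq]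
    ring
  have norm_sub_center (l : ℝ) : ‖q - l • q‖ = 2 * |1 - l| * ‖p‖ := by
    rw [show q - l • q = (1 - l) • q by module, norm_smul, Real.norm_eq_abs, hq]
    ring
  have norm_sub_sq := norm_sub_smul_sq p q
  rw [hq] at norm_sub_sq
  -- With `c` on the ray from `0` through `q`, the size of `⟪p, q⟫` decides which of `0` and `p` is
  -- nearer to `c`: the multiple `l = 3 / 4` leaves `p` the farther one, `l = 2` the nearer one.
  rcases le_total (inner ℝ p q) (‖p‖ ^ 2 / 2) with inner_le | le_inner
  · have norm_le : ‖p‖ / 2 ≤ ‖p - (3 / 4 : ℝ) • q‖ := by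
      have := norm_sub_norm_le ((3 / 4 : ℝ) • q) p
      rw [norm_center (by norm_num), norm_sub_rev] at this
      linarith
    refine ⟨(3 / 4 : ℝ) • q, ‖(3 / 4 : ℝ) • q‖, ‖p - (3 / 4 : ℝ) • q‖, ?_, by linarith, ?_, ?_,
      Set.Icc_subset_uIcc⟩
    · rw [norm_center (by norm_num)]
      positivity
    · rw [norm_sub_center, norm_center (by norm_num), abs_of_nonneg (by norm_num)]
      linarith
    · rw [norm_sub_sq, norm_center (by norm_num)]
      linarith [sq_nonneg ‖p‖]
  · have norm_le : 3 * ‖p‖ ≤ ‖p - (2 : ℝ) • q‖ := by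
      have := norm_sub_norm_le ((2 : ℝ) • q) p
      rw [norm_center (by norm_num), norm_sub_rev] at this
      linarith
    refine ⟨(2 : ℝ) • q, ‖p - (2 : ℝ) • q‖, ‖(2 : ℝ) • q‖, by linarith, ?_, ?_, ?_,
      Set.Icc_subset_uIcc'⟩
    · rw [norm_center (by norm_num)]
      positivity
    · rw [norm_sub_center, abs_of_neg (by norm_num)]
      linarith
    · rw [norm_sub_sq, norm_center (by norm_num)]
      linarith

lemma exists_center_of_dist_eq_two_mul_dist {x p q : E} (hp : p ≠ x)
    (hq : dist q x = 2 * dist p x) :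
    ∃ (c : E) (a b : ℝ), 0 < a ∧ 0 < b ∧ dist q c ≤ a ∧ 16 * a ^ 2 ≤ 15 * b ^ 2 ∧
      Set.Icc a b ⊆ Set.uIcc (dist x c) (dist p c) := by
  rw [dist_eq_norm, dist_eq_norm] at hq
  obtain ⟨c, a, b, ha, hb, hqc, hab, hIcc⟩ :=
    exists_center_of_norm_eq_two_mul_norm (sub_ne_zero.mpr hp) hq
  refine ⟨x + c, a, b, ha, hb, ?_, hab, ?_⟩
  · rwa [dist_eq_norm, ← sub_sub]
  · rwa [dist_self_add_right, dist_eq_norm, ← sub_sub]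

end Geometry

section Energy

variable {F : Type*} [NormedAddCommGroup F] [NormedSpace ℝ F]

lemma sq_lintegral_le_measure_univ_mul_lintegral_sq {α : Type*} [MeasurableSpace α] {μ : Measure α}
    {g : α → ℝ≥0∞} (hg : AEMeasurable g μ) :
    (∫⁻ x, g x ∂μ) ^ 2 ≤ μ Set.univ * ∫⁻ x, g x ^ 2 ∂μ := by
  have h := ENNReal.lintegral_mul_le_Lp_mul_Lq μ Real.HolderConjugate.two_two
    (aemeasurable_const (b := (1 : ℝ≥0∞))) hg
  simp only [Pi.mul_apply, one_mul, ENNReal.one_rpow, lintegral_one] at h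
  calc (∫⁻ x, g x ∂μ) ^ 2
      ≤ (μ Set.univ ^ (1 / 2 : ℝ) * (∫⁻ x, g x ^ (2 : ℝ) ∂μ) ^ (1 / 2 : ℝ)) ^ 2 := by gcongr
    _ = μ Set.univ * ∫⁻ x, g x ^ 2 ∂μ := by
        have sq_sqrt (y : ℝ≥0∞) : (y ^ (1 / 2 : ℝ)) ^ 2 = y := by
          rw [← ENNReal.rpow_mul_natCast, Nat.cast_ofNat, one_div_mul_cancel two_ne_zero,
            ENNReal.rpow_one]
        simp only [mul_pow, sq_sqrt, ENNReal.rpow_two]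

lemma enorm_sub_sq_le_mul_lintegral_enorm_deriv_sq {f : ℝ → F} (hf : ContDiff ℝ 1 f) {a b x y : ℝ}
    (hx : x ∈ Set.Icc a b) (hy : y ∈ Set.Icc a b) :
    ‖f y - f x‖ₑ ^ 2 ≤ ENNReal.ofReal (b - a) * ∫⁻ t in Set.Icc a b, ‖deriv f t‖ₑ ^ 2 := by
  wlog hxy : x ≤ y generalizing x y
  · simpa only [enorm_sub_rev] using this hy hx (le_of_not_ge hxy)
  calc ‖f y - f x‖ₑ ^ 2
      ≤ (∫⁻ t in Set.Icc x y, ‖deriv f t‖ₑ) ^ 2 := by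
        gcongr
        exact enorm_sub_le_lintegral_deriv_of_contDiffOn_Icc hf.contDiffOn hxy
    _ ≤ (∫⁻ t in Set.Icc a b, ‖deriv f t‖ₑ) ^ 2 := by
        gcongr
        exacts [hx.1, hy.2]
    _ ≤ ENNReal.ofReal (b - a) * ∫⁻ t in Set.Icc a b, ‖deriv f t‖ₑ ^ 2 := by
        have := sq_lintegral_le_measure_univ_mul_lintegral_sq (μ := volume.restrict (Set.Icc a b))
          (hf.continuous_deriv_one).enorm.aemeasurable
        rwa [Measure.restrict_apply_univ, Real.volume_Icc] at this

lemma enorm_sub_sq_le_lintegral_circleMap {u : ℂ → F} (hu : ContDiff ℝ 1 u) {c z w : ℂ} {t : ℝ}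
    (ht : 0 ≤ t) (hz : z ∈ sphere c t) (hw : w ∈ sphere c t) :
    ‖u w - u z‖ₑ ^ 2 ≤ ENNReal.ofReal (2 * π * t ^ 2) *
      ∫⁻ θ in Set.Icc (-π) π, ‖fderiv ℝ u (circleMap c t θ)‖ₑ ^ 2 := by
  have exists_angle {z : ℂ} (hz : z ∈ sphere c t) : ∃ θ ∈ Set.Icc (-π) π, circleMap c t θ = z := by
    rw [← abs_of_nonneg ht, ← range_circleMap,
      ← (periodic_circleMap c t).image_Icc two_pi_pos (-π)] at hz
    rwa [show -π + 2 * π = π by ring] at hz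
  obtain ⟨α, hα, rfl⟩ := exists_angle hz
  obtain ⟨β, hβ, rfl⟩ := exists_angle hw
  have enorm_deriv_le (θ : ℝ) : ‖deriv (u ∘ circleMap c t) θ‖ₑ ^ 2 ≤
      ENNReal.ofReal (t ^ 2) * ‖fderiv ℝ u (circleMap c t θ)‖ₑ ^ 2 := by
    have chain := ((hu.differentiable one_ne_zero _).hasFDerivAt.comp_hasDerivAt θ
      (hasDerivAt_circleMap c t θ)).deriv
    have speed : ‖circleMap 0 t θ * Complex.I‖ₑ = ENNReal.ofReal t := by
      rw [← ofReal_norm, norm_mul, Complex.norm_I, mul_one, norm_circleMap_zero, abs_of_nonneg ht]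
    rw [chain, ENNReal.ofReal_pow ht, ← speed, ← mul_pow,
      mul_comm ‖circleMap 0 t θ * Complex.I‖ₑ]
    gcongr
    exact (fderiv ℝ u (circleMap c t θ)).le_opENorm _
  calc ‖u (circleMap c t β) - u (circleMap c t α)‖ₑ ^ 2
      ≤ ENNReal.ofReal (π - -π) *
          ∫⁻ θ in Set.Icc (-π) π, ‖deriv (u ∘ circleMap c t) θ‖ₑ ^ 2 :=
        enorm_sub_sq_le_mul_lintegral_enorm_deriv_sq (hu.comp (contDiff_circleMap c t)) hα hβ
    _ ≤ ENNReal.ofReal (π - -π) * ∫⁻ θ in Set.Icc (-π) π,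
          ENNReal.ofReal (t ^ 2) * ‖fderiv ℝ u (circleMap c t θ)‖ₑ ^ 2 := by
        gcongr with θ
        exact enorm_deriv_le θ
    _ = ENNReal.ofReal (2 * π * t ^ 2) *
          ∫⁻ θ in Set.Icc (-π) π, ‖fderiv ℝ u (circleMap c t θ)‖ₑ ^ 2 := by
        rw [lintegral_const_mul' _ _ ENNReal.ofReal_ne_top, ← mul_assoc,
          ← ENNReal.ofReal_mul (by linarith [pi_pos]), sub_neg_eq_add, ← two_mul]

lemma lintegral_eq_lintegral_circleMap {g : ℂ → ℝ≥0∞} (hg : Measurable g) (c : ℂ) :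
    ∫⁻ z, g z = ∫⁻ t in Set.Ioi 0, ENNReal.ofReal t *
      ∫⁻ θ in Set.Icc (-π) π, g (circleMap c t θ) := by
  have polarCoord_symm_add (t θ : ℝ) : Complex.polarCoord.symm (t, θ) + c = circleMap c t θ := by
    rw [Complex.polarCoord_symm_apply, circleMap, Complex.exp_mul_I, add_comm]
    norm_cast
  rw [← lintegral_add_right_eq_self g c, ← Complex.lintegral_comp_polarCoord_symm,
    polarCoord_target, Measure.volume_eq_prod, ← Measure.prod_restrict, lintegral_prod]
  · refine lintegral_congr fun t ↦ ?_
    simp only [polarCoord_symm_add, smul_eq_mul]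
    rw [lintegral_const_mul' _ _ ENNReal.ofReal_ne_top, Measure.restrict_congr_set Ioo_ae_eq_Icc]
  · simp only [Complex.polarCoord_symm_apply]
    fun_prop

lemma setLIntegral_Icc_ofReal_inv {a b : ℝ} (ha : 0 < a) (hab : a ≤ b) :
    ∫⁻ t in Set.Icc a b, ENNReal.ofReal t⁻¹ = ENNReal.ofReal (log (b / a)) := by
  have integrable_inv : IntegrableOn (fun t : ℝ ↦ t⁻¹) (Set.Icc a b) :=
    (continuousOn_inv₀.mono fun t ht ↦ (ha.trans_le ht.1).ne').integrableOn_Icc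
  rw [← ofReal_integral_eq_lintegral_ofReal integrable_inv
      ((ae_restrict_iff' measurableSet_Icc).mpr (.of_forall fun t ht ↦
        inv_nonneg.mpr (ha.le.trans ht.1))),
    integral_Icc_eq_integral_Ioc, ← intervalIntegral.integral_of_le hab,
    integral_inv_of_pos ha (ha.trans_le hab)]

/-- The Dirichlet integral `∬ |∇u|²` of a function on the plane, with values in `[0, ∞]`. -/
noncomputable def dirichletEnergy (u : ℂ → F) : ℝ≥0∞ := ∫⁻ z, ‖fderiv ℝ u z‖ₑ ^ 2

lemma sq_mul_log_div_le_dirichletEnergy {u : ℂ → F} (hu : ContDiff ℝ 1 u) {c : ℂ} {a b : ℝ}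
    {δ : ℝ≥0∞} (ha : 0 < a) (hab : a ≤ b)
    (hδ : ∀ t ∈ Set.Icc a b, ∃ z ∈ sphere c t, ∃ w ∈ sphere c t, δ ≤ ‖u w - u z‖ₑ) :
    δ ^ 2 * ENNReal.ofReal (log (b / a)) ≤ ENNReal.ofReal (2 * π) * dirichletEnergy u := by
  have measurable_integrand : Measurable fun z ↦ ‖fderiv ℝ u z‖ₑ ^ 2 :=
    ((hu.continuous_fderiv one_ne_zero).enorm.measurable).pow_const 2
  have circle_bound (t : ℝ) (ht : t ∈ Set.Icc a b) : δ ^ 2 * ENNReal.ofReal t⁻¹ ≤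
      ENNReal.ofReal (2 * π) * (ENNReal.ofReal t *
        ∫⁻ θ in Set.Icc (-π) π, ‖fderiv ℝ u (circleMap c t θ)‖ₑ ^ 2) := by
    have ht_pos : 0 < t := ha.trans_le ht.1
    obtain ⟨z, hz, w, hw, hzw⟩ := hδ t ht
    calc δ ^ 2 * ENNReal.ofReal t⁻¹
        ≤ ENNReal.ofReal (2 * π * t ^ 2) *
            (∫⁻ θ in Set.Icc (-π) π, ‖fderiv ℝ u (circleMap c t θ)‖ₑ ^ 2) *
              ENNReal.ofReal t⁻¹ := by
          gcongr
          exact (pow_le_pow_left₀ zero_le hzw 2).trans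
            (enorm_sub_sq_le_lintegral_circleMap hu ht_pos.le hz hw)
      _ = _ := by
          rw [mul_right_comm, ← ENNReal.ofReal_mul (by positivity), ← mul_assoc,
            ← ENNReal.ofReal_mul (by positivity)]
          congr 2
          field_simp
  calc δ ^ 2 * ENNReal.ofReal (log (b / a))
      = ∫⁻ t in Set.Icc a b, δ ^ 2 * ENNReal.ofReal t⁻¹ := by
        rw [lintegral_const_mul _ (by fun_prop), setLIntegral_Icc_ofReal_inv ha hab]
    _ ≤ ∫⁻ t in Set.Icc a b, ENNReal.ofReal (2 * π) * (ENNReal.ofReal t *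
          ∫⁻ θ in Set.Icc (-π) π, ‖fderiv ℝ u (circleMap c t θ)‖ₑ ^ 2) :=
        setLIntegral_mono' measurableSet_Icc circle_bound
    _ ≤ ∫⁻ t in Set.Ioi 0, ENNReal.ofReal (2 * π) * (ENNReal.ofReal t *
          ∫⁻ θ in Set.Icc (-π) π, ‖fderiv ℝ u (circleMap c t θ)‖ₑ ^ 2) :=
        lintegral_mono_set fun t ht ↦ ha.trans_le ht.1
    _ = ENNReal.ofReal (2 * π) * dirichletEnergy u := by
        rw [lintegral_const_mul' _ _ ENNReal.ofReal_ne_top, dirichletEnergy,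
          lintegral_eq_lintegral_circleMap measurable_integrand c]

end Energy

section LogPotential

variable {E : Type*} [NormedAddCommGroup E] {w₀ : E} {m M : ℝ}

/-- A smooth substitute for `log ‖w - w₀‖` truncated to the annulus `m ≤ ‖w - w₀‖ ≤ M`, used as a
test function for the capacity of that annulus. It is normalised to vanish at infinity. -/
noncomputable def logPotential (w₀ : E) (m M : ℝ) (w : E) : ℝ :=
  (log (m ^ 2 + ‖w - w₀‖ ^ 2) - log (M ^ 2 + ‖w - w₀‖ ^ 2)) / 2

lemma log_div_le_logPotential_sub (hm : 0 < m) (hM : 0 < M) {w w' : E} (hw : ‖w - w₀‖ ≤ m)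
    (hw' : M ≤ ‖w' - w₀‖) :
    log (M / (2 * m)) ≤ logPotential w₀ m M w' - logPotential w₀ m M w := by
  have hw'_pos : 0 < ‖w' - w₀‖ := hM.trans_le hw'
  have near : log (m ^ 2 + ‖w - w₀‖ ^ 2) ≤ log (2 * m ^ 2) := by
    gcongr
    linarith [pow_le_pow_left₀ (norm_nonneg _) hw 2]
  have near' : log (M ^ 2) ≤ log (M ^ 2 + ‖w - w₀‖ ^ 2) := by
    gcongr
    linarith [sq_nonneg ‖w - w₀‖]
  have far : log (‖w' - w₀‖ ^ 2) ≤ log (m ^ 2 + ‖w' - w₀‖ ^ 2) := by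
    gcongr
    linarith [sq_nonneg m]
  have far' : log (M ^ 2 + ‖w' - w₀‖ ^ 2) ≤ log (2 * ‖w' - w₀‖ ^ 2) := by
    gcongr
    linarith [pow_le_pow_left₀ hM.le hw' 2]
  rw [log_mul two_ne_zero (by positivity), log_pow] at near far'
  rw [log_pow] at near' far
  rw [log_div hM.ne' (by positivity), log_mul two_ne_zero hm.ne', logPotential, logPotential]
  push_cast at near near' far far'
  linarith

/-- The gradient of `logPotential w₀ m M` at `w` is `logDensity m M ‖w - w₀‖ • (w - w₀)`; the same
function also bounds the square of the norm of this gradient. -/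
noncomputable def logDensity (m M t : ℝ) : ℝ :=
  (M ^ 2 - m ^ 2) / ((m ^ 2 + t ^ 2) * (M ^ 2 + t ^ 2))

lemma logDensity_nonneg (hm : 0 ≤ m) (hmM : m ≤ M) (t : ℝ) : 0 ≤ logDensity m M t := by
  have := pow_le_pow_left₀ hm hmM 2
  exact div_nonneg (sub_nonneg.mpr this) (by positivity)

lemma logDensity_mul_sq_le_one (hm : m ≠ 0) (hM : M ≠ 0) (t : ℝ) :
    logDensity m M t * t ^ 2 ≤ 1 := by
  rw [logDensity, div_mul_eq_mul_div, div_le_one (by positivity)]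
  nlinarith [sq_nonneg (m * M), sq_nonneg (m * t), sq_nonneg (t ^ 2)]

variable [InnerProductSpace ℝ E]

lemma contDiff_logPotential (hm : m ≠ 0) (hM : M ≠ 0) {n : WithTop ℕ∞} :
    ContDiff ℝ n (logPotential w₀ m M) := by
  have contDiff_log {k : ℝ} (hk : k ≠ 0) : ContDiff ℝ n fun w ↦ log (k ^ 2 + ‖w - w₀‖ ^ 2) :=
    (contDiff_const.add ((contDiff_id.sub contDiff_const).norm_sq ℝ)).log fun w ↦ by positivity
  exact ((contDiff_log hm).sub (contDiff_log hM)).div_const 2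

lemma hasFDerivAt_logPotential (hm : m ≠ 0) (hM : M ≠ 0) (w : E) :
    HasFDerivAt (logPotential w₀ m M) (logDensity m M ‖w - w₀‖ • innerSL ℝ (w - w₀)) w := by
  have hasFDerivAt_log {k : ℝ} (hk : k ≠ 0) : HasFDerivAt (fun w ↦ log (k ^ 2 + ‖w - w₀‖ ^ 2))
      ((k ^ 2 + ‖w - w₀‖ ^ 2)⁻¹ • 2 • innerSL ℝ (w - w₀)) w := by
    have norm_sq := (((hasFDerivAt_id w).sub_const w₀).norm_sq).const_add (k ^ 2)
    simpa using norm_sq.log (by positivity)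
  refine (((hasFDerivAt_log hm).sub (hasFDerivAt_log hM)).mul_const (2⁻¹ : ℝ)).congr_fderiv ?_
  rw [logDensity, ← Nat.cast_smul_eq_nsmul ℝ]
  match_scalars
  field_simp
  ring

lemma norm_fderiv_logPotential_sq_le (hm : 0 < m) (hmM : m ≤ M) (w : E) :
    ‖fderiv ℝ (logPotential w₀ m M) w‖ ^ 2 ≤ logDensity m M ‖w - w₀‖ := by
  have hM : 0 < M := hm.trans_le hmM
  have density_nonneg := logDensity_nonneg hm.le hmM ‖w - w₀‖
  rw [(hasFDerivAt_logPotential hm.ne' hM.ne' w).fderiv, norm_smul, innerSL_apply_norm,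
    Real.norm_of_nonneg density_nonneg, mul_pow, sq (logDensity _ _ _), mul_assoc]
  exact mul_le_of_le_one_right density_nonneg (logDensity_mul_sq_le_one hm.ne' hM.ne' _)

lemma tendsto_logPotential_atTop (hm : m ≠ 0) (hM : M ≠ 0) :
    Filter.Tendsto (logPotential (0 : ℝ) m M) Filter.atTop (nhds 0) := by
  have ratio (t : ℝ) : logPotential 0 m M t =
      log (1 + (m ^ 2 - M ^ 2) * (M ^ 2 + t ^ 2)⁻¹) / 2 := by
    rw [logPotential, sub_zero, Real.norm_eq_abs, sq_abs,
      ← log_div (by positivity) (by positivity)]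
    congr 2
    field_simp
    ring
  have inv_tendsto : Filter.Tendsto (fun t : ℝ ↦ (M ^ 2 + t ^ 2)⁻¹) Filter.atTop (nhds 0) :=
    (Filter.tendsto_atTop_add_const_left _ _
      (Filter.tendsto_pow_atTop two_ne_zero)).inv_tendsto_atTop
  have log_tendsto :=
    (((inv_tendsto.const_mul (m ^ 2 - M ^ 2)).const_add 1).log (by norm_num)).div_const 2
  simpa [← ratio] using log_tendsto

lemma lintegral_Ioi_mul_logDensity (hm : 0 < m) (hmM : m ≤ M) :
    ∫⁻ t in Set.Ioi 0, ENNReal.ofReal (t * logDensity m M t) = ENNReal.ofReal (log (M / m)) := by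
  have hM : 0 < M := hm.trans_le hmM
  have deriv_potential (t : ℝ) (_ : t ∈ Set.Ici 0) :
      HasDerivAt (logPotential (0 : ℝ) m M) (t * logDensity m M t) t := by
    simpa [logDensity, mul_comm] using
      (hasFDerivAt_logPotential (w₀ := 0) hm.ne' hM.ne' t).hasDerivAt
  have integrand_nonneg (t : ℝ) (ht : t ∈ Set.Ioi 0) : 0 ≤ t * logDensity m M t :=
    mul_nonneg (le_of_lt ht) (logDensity_nonneg hm.le hmM t)
  have tendsto_zero := tendsto_logPotential_atTop hm.ne' hM.ne'
  rw [← ofReal_integral_eq_lintegral_ofReal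
      (integrableOn_Ioi_deriv_of_nonneg' deriv_potential integrand_nonneg tendsto_zero)
      ((ae_restrict_iff' measurableSet_Ioi).mpr (.of_forall integrand_nonneg)),
    integral_Ioi_of_hasDerivAt_of_nonneg' deriv_potential integrand_nonneg tendsto_zero]
  congr 1
  simp only [logPotential, sub_self, norm_zero, ne_eq, OfNat.ofNat_ne_zero, not_false_eq_true,
    zero_pow, add_zero, log_pow, Nat.cast_ofNat, zero_sub, log_div hM.ne' hm.ne']
  ring

lemma dirichletEnergy_logPotential_le {w₀ : ℂ} (hm : 0 < m) (hmM : m ≤ M) :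
    dirichletEnergy (logPotential w₀ m M) ≤ ENNReal.ofReal (2 * π * log (M / m)) := by
  have measurable_density : Measurable fun w : ℂ ↦ ENNReal.ofReal (logDensity m M ‖w - w₀‖) := by
    unfold logDensity
    fun_prop
  calc dirichletEnergy (logPotential w₀ m M)
      ≤ ∫⁻ w, ENNReal.ofReal (logDensity m M ‖w - w₀‖) := by
        refine lintegral_mono fun w ↦ ?_
        rw [← ofReal_norm, ← ENNReal.ofReal_pow (norm_nonneg _)]
        exact ENNReal.ofReal_le_ofReal (norm_fderiv_logPotential_sq_le hm hmM w)
    _ = ∫⁻ t in Set.Ioi 0, ENNReal.ofReal (2 * π) * ENNReal.ofReal (t * logDensity m M t) := by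
        rw [lintegral_eq_lintegral_circleMap measurable_density w₀]
        refine setLIntegral_congr_fun measurableSet_Ioi fun t ht ↦ ?_
        simp only [circleMap_sub_center, norm_circleMap_zero, abs_of_pos (Set.mem_Ioi.mp ht),
          lintegral_const, Measure.restrict_apply_univ, Real.volume_Icc]
        rw [ENNReal.ofReal_mul (le_of_lt ht), sub_neg_eq_add, ← two_mul]
        ring
    _ = ENNReal.ofReal (2 * π * log (M / m)) := by
        rw [lintegral_const_mul' _ _ ENNReal.ofReal_ne_top, lintegral_Ioi_mul_logDensity hm hmM,
          ← ENNReal.ofReal_mul (by positivity)]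

end LogPotential

lemma half_one_sub_sq_le_log_div {a b : ℝ} (ha : 0 < a) (hb : 0 < b) :
    (1 - (a / b) ^ 2) / 2 ≤ log (b / a) := by
  have log_le := log_le_sub_one_of_pos (x := (a / b) ^ 2) (by positivity)
  have log_swap : log (a / b) = -log (b / a) := by rw [← inv_div, log_inv]
  rw [log_pow, log_swap, Nat.cast_two] at log_le
  linarith

namespace IsC1QCPlane

variable {K : ℝ} {φ : ℂ → ℂ}

lemma nonneg (hφ : IsC1QCPlane K φ) : 0 ≤ K := by
  obtain ⟨det_pos, norm_sq_le⟩ := hφ.2.2 0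
  exact nonneg_of_mul_nonneg_left ((sq_nonneg _).trans norm_sq_le) det_pos

lemma differentiable (hφ : IsC1QCPlane K φ) : Differentiable ℝ φ :=
  hφ.1.differentiable one_ne_zero

lemma isHomeomorph (hφ : IsC1QCPlane K φ) : IsHomeomorph φ where
  continuous := hφ.1.continuous
  isOpenMap := isOpenMap_of_hasStrictFDerivAt_equiv
    (f' := fun z ↦ (fderiv ℝ φ z).toContinuousLinearEquivOfDetNeZero (hφ.2.2 z).1.ne')
    fun z ↦ by simpa using hφ.1.contDiffAt.hasStrictFDerivAt one_ne_zero
  bijective := hφ.2.1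

lemma setIntegral_det_fderiv (hφ : IsC1QCPlane K φ) {s : Set ℂ} (hs : MeasurableSet s) :
    ∫ z in s, (fderiv ℝ φ z).det = volume.real (φ '' s) := by
  have change_of_variables := integral_image_eq_integral_abs_det_fderiv_smul volume hs
    (fun z _ ↦ (hφ.differentiable z).hasFDerivAt.hasFDerivWithinAt) hφ.2.1.injective.injOn
    fun _ ↦ (1 : ℝ)
  simpa [abs_of_pos (hφ.2.2 _).1] using change_of_variables.symm

lemma dirichletEnergy_comp_le {F : Type*} [NormedAddCommGroup F] [NormedSpace ℝ F]
    (hφ : IsC1QCPlane K φ) {u : ℂ → F} (hu : Differentiable ℝ u) :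
    dirichletEnergy (u ∘ φ) ≤ ENNReal.ofReal K * dirichletEnergy u := by
  have pointwise (z : ℂ) : ‖fderiv ℝ (u ∘ φ) z‖ₑ ^ 2 ≤
      ENNReal.ofReal K * (ENNReal.ofReal |(fderiv ℝ φ z).det| * ‖fderiv ℝ u (φ z)‖ₑ ^ 2) := by
    obtain ⟨det_pos, norm_sq_le⟩ := hφ.2.2 z
    calc ‖fderiv ℝ (u ∘ φ) z‖ₑ ^ 2
        ≤ (‖fderiv ℝ u (φ z)‖ₑ * ‖fderiv ℝ φ z‖ₑ) ^ 2 := by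
          rw [fderiv_comp z (hu _) (hφ.differentiable z)]
          gcongr
          exact ContinuousLinearMap.opENorm_comp_le _ _
      _ = ENNReal.ofReal (‖fderiv ℝ φ z‖ ^ 2) * ‖fderiv ℝ u (φ z)‖ₑ ^ 2 := by
          rw [mul_pow, mul_comm, ENNReal.ofReal_pow (norm_nonneg _), ofReal_norm]
      _ ≤ ENNReal.ofReal (K * |(fderiv ℝ φ z).det|) * ‖fderiv ℝ u (φ z)‖ₑ ^ 2 := by
          rw [abs_of_pos det_pos]
          gcongr
      _ = _ := by rw [ENNReal.ofReal_mul' (abs_nonneg _), mul_assoc]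
  have change_of_variables := lintegral_image_eq_lintegral_abs_det_fderiv_mul volume
    MeasurableSet.univ (fun z _ ↦ (hφ.differentiable z).hasFDerivAt.hasFDerivWithinAt)
    hφ.2.1.injective.injOn fun w ↦ ‖fderiv ℝ u w‖ₑ ^ 2
  rw [Set.image_univ_of_surjective hφ.2.1.surjective] at change_of_variables
  simp only [Measure.restrict_univ] at change_of_variables
  calc dirichletEnergy (u ∘ φ)
      ≤ ∫⁻ z, ENNReal.ofReal K *
          (ENNReal.ofReal |(fderiv ℝ φ z).det| * ‖fderiv ℝ u (φ z)‖ₑ ^ 2) :=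
        lintegral_mono pointwise
    _ = ENNReal.ofReal K * dirichletEnergy u := by
        rw [lintegral_const_mul' _ _ ENNReal.ofReal_ne_top, ← change_of_variables, dirichletEnergy]

lemma sq_log_div_mul_log_div_le (hφ : IsC1QCPlane K φ) {c w₀ : ℂ} {m M a b : ℝ} (hm : 0 < m)
    (hmM : 2 * m ≤ M) (ha : 0 < a) (hab : a ≤ b)
    (hnear : ∀ t ∈ Set.Icc a b, ∃ z ∈ sphere c t, dist (φ z) w₀ ≤ m)
    (hfar : ∀ t ∈ Set.Icc a b, ∃ w ∈ sphere c t, M ≤ dist (φ w) w₀) :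
    log (M / (2 * m)) ^ 2 * log (b / a) ≤ 4 * π ^ 2 * K * log (M / m) := by
  have hM : 0 < M := by linarith
  have log_ratio_nonneg : 0 ≤ log (M / m) := log_nonneg ((one_le_div hm).mpr (by linarith))
  have gap_nonneg : 0 ≤ log (M / (2 * m)) := log_nonneg ((one_le_div (by positivity)).mpr hmM)
  have hK := hφ.nonneg
  let U := logPotential w₀ m M
  have contDiff_U : ContDiff ℝ 1 U := contDiff_logPotential hm.ne' hM.ne'
  have oscillation : ∀ t ∈ Set.Icc a b, ∃ z ∈ sphere c t, ∃ w ∈ sphere c t,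
      ENNReal.ofReal (log (M / (2 * m))) ≤ ‖(U ∘ φ) w - (U ∘ φ) z‖ₑ := by
    intro t ht
    obtain ⟨z, hz, hzm⟩ := hnear t ht
    obtain ⟨w, hw, hwM⟩ := hfar t ht
    rw [dist_eq_norm] at hzm hwM
    refine ⟨z, hz, w, hw, ?_⟩
    rw [← ofReal_norm]
    exact ENNReal.ofReal_le_ofReal
      ((log_div_le_logPotential_sub hm hM hzm hwM).trans (le_norm_self _))
  have energy_bound := calc
    ENNReal.ofReal (log (M / (2 * m))) ^ 2 * ENNReal.ofReal (log (b / a))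
      ≤ ENNReal.ofReal (2 * π) * dirichletEnergy (U ∘ φ) :=
        sq_mul_log_div_le_dirichletEnergy (contDiff_U.comp hφ.1) ha hab oscillation
    _ ≤ ENNReal.ofReal (2 * π) * (ENNReal.ofReal K * ENNReal.ofReal (2 * π * log (M / m))) := by
        gcongr
        exact (hφ.dirichletEnergy_comp_le (contDiff_U.differentiable one_ne_zero)).trans
          (mul_le_mul_right (dirichletEnergy_logPotential_le hm (by linarith)) _)
  rw [← ENNReal.ofReal_pow gap_nonneg, ← ENNReal.ofReal_mul (by positivity),
    ← ENNReal.ofReal_mul hK, ← ENNReal.ofReal_mul (by positivity),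
    ENNReal.ofReal_le_ofReal_iff (by positivity)] at energy_bound
  linarith

lemma log_dist_map_div_dist_map_le (hφ : IsC1QCPlane K φ) {z₀ p q : ℂ} (hp : p ≠ z₀)
    (hq : dist q z₀ = 2 * dist p z₀)
    (hpq : 4 * dist (φ p) (φ z₀) ≤ dist (φ q) (φ z₀)) :
    log (dist (φ q) (φ z₀) / dist (φ p) (φ z₀)) ≤ 512 * π ^ 2 * K := by
  obtain ⟨c, a, b, ha, hb, hqc, hab, hIcc⟩ := exists_center_of_dist_eq_two_mul_dist hp hq
  set m := dist (φ p) (φ z₀)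
  set M := dist (φ q) (φ z₀)
  set L := log (M / m)
  have hm : 0 < m := dist_pos.mpr (hφ.2.1.injective.ne hp)
  have hM : 0 < M := by linarith
  have a_le_b : a ≤ b := (sq_le_sq₀ ha.le hb.le).mp (by linarith [sq_nonneg b])
  have capacity : log (M / (2 * m)) ^ 2 * log (b / a) ≤ 4 * π ^ 2 * K * L := by
    refine hφ.sq_log_div_mul_log_div_le (c := c) (w₀ := φ z₀) hm (by linarith) ha a_le_b
      (fun t ht ↦ ?_) fun t ht ↦ ?_
    · exact exists_mem_sphere_dist_map_le_dist_map (hφ.isHomeomorph.homeomorph φ) (hIcc ht)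
    · exact exists_mem_sphere_dist_le_dist_map (hφ.isHomeomorph.homeomorph φ)
        (dist_pos.mp hM) (hqc.trans ht.1)
  have log_radii : 1 / 32 ≤ log (b / a) := by
    refine le_trans ?_ (half_one_sub_sq_le_log_div ha hb)
    have : (a / b) ^ 2 ≤ 15 / 16 := by
      rw [div_pow, div_le_iff₀ (by positivity)]
      linarith
    linarith
  have two_log_two_le : 2 * log 2 ≤ L := by
    rw [← Nat.cast_two, ← log_pow]
    exact log_le_log (by norm_num) ((le_div_iff₀ hm).mpr (by push_cast; linarith))
  have half_le : L / 2 ≤ log (M / (2 * m)) := by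
    rw [mul_comm 2 m, ← div_div, log_div (by positivity) two_ne_zero]
    linarith
  have L_pos : 0 < L := two_log_two_le.trans_lt' (by positivity)
  have quadratic : L * (L / 128) ≤ L * (4 * π ^ 2 * K) := calc
    L * (L / 128) = (L / 2) ^ 2 * (1 / 32) := by ring
    _ ≤ log (M / (2 * m)) ^ 2 * log (b / a) := by gcongr
    _ ≤ L * (4 * π ^ 2 * K) := by linarith
  linarith [le_of_mul_le_mul_left quadratic L_pos]

lemma dist_map_le_exp_mul_dist_map (hK : 1 ≤ K) (hφ : IsC1QCPlane K φ) {z₀ p q : ℂ}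
    (hq : dist q z₀ = 2 * dist p z₀) :
    dist (φ q) (φ z₀) ≤ exp (512 * π ^ 2 * K) * dist (φ p) (φ z₀) := by
  rcases eq_or_ne p z₀ with rfl | hp
  · rw [dist_self, mul_zero, dist_eq_zero] at hq
    simp [hq]
  have hm : 0 < dist (φ p) (φ z₀) := dist_pos.mpr (hφ.2.1.injective.ne hp)
  rcases le_total (dist (φ q) (φ z₀)) (4 * dist (φ p) (φ z₀)) with hle | hge
  · have four_le_exp : 4 ≤ exp (512 * π ^ 2 * K) := by
      have : 9 * 1 ≤ π ^ 2 * K := by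
        gcongr
        nlinarith [pi_gt_three]
      linarith [add_one_le_exp (512 * π ^ 2 * K)]
    exact hle.trans (by gcongr)
  · rw [← div_le_iff₀ hm, ← log_le_iff_le_exp (div_pos (by linarith) hm)]
    exact hφ.log_dist_map_div_dist_map_le hp hq hge

lemma volume_image_ball_ne_top (hφ : IsC1QCPlane K φ) (z₀ : ℂ) (r : ℝ) :
    volume (φ '' ball z₀ r) ≠ ∞ :=
  measure_ne_top_of_subset (Set.image_mono ball_subset_closedBall)
    ((isCompact_closedBall z₀ r).image hφ.1.continuous).measure_ne_top

lemma volume_image_ball_two_mul_le (hK : 1 ≤ K) (hφ : IsC1QCPlane K φ) (z₀ : ℂ) {r : ℝ}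
    (hr : 0 ≤ r) :
    volume (φ '' ball z₀ (2 * r)) ≤
      ENNReal.ofReal (exp (1024 * π ^ 2 * K)) * volume (φ '' ball z₀ r) := by
  let h := hφ.isHomeomorph.homeomorph φ
  obtain ⟨p, hp, ball_subset⟩ := exists_mem_sphere_ball_subset_image_ball h z₀ hr
  obtain ⟨q, hq, subset_closedBall⟩ :=
    exists_mem_sphere_image_closedBall_subset_closedBall h z₀ (mul_nonneg zero_le_two hr)
  have distortion : dist (φ q) (φ z₀) ≤ exp (512 * π ^ 2 * K) * dist (φ p) (φ z₀) :=
    hφ.dist_map_le_exp_mul_dist_map hK (by rw [mem_sphere.mp hq, mem_sphere.mp hp])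
  calc volume (φ '' ball z₀ (2 * r))
      ≤ volume (closedBall (φ z₀) (dist (φ q) (φ z₀))) :=
        measure_mono ((Set.image_mono ball_subset_closedBall).trans subset_closedBall)
    _ ≤ volume (closedBall (φ z₀) (exp (512 * π ^ 2 * K) * dist (φ p) (φ z₀))) := by gcongr
    _ = ENNReal.ofReal (exp (1024 * π ^ 2 * K)) * volume (ball (φ z₀) (dist (φ p) (φ z₀))) := by
        rw [Complex.volume_closedBall, Complex.volume_ball, ENNReal.ofReal_mul (exp_pos _).le,
          mul_pow, ← ENNReal.ofReal_pow (exp_pos _).le, ← exp_nat_mul, mul_assoc]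
        ring_nf
    _ ≤ ENNReal.ofReal (exp (1024 * π ^ 2 * K)) * volume (φ '' ball z₀ r) := by
        gcongr
        exact ball_subset

end IsC1QCPlane

lemma doubling_exponent_le {K : ℝ} (hK : 0 ≤ K) :
    1024 * π ^ 2 * K ≤ K * π ^ 2 * (2 + π ^ 4) ^ 2 / (2 * log 3) := by
  have log_three_le : log 3 ≤ 2 := by linarith [log_le_sub_one_of_pos (x := 3) (by norm_num)]
  have pi_pow_ge : 81 ≤ π ^ 4 := by
    linarith [pow_le_pow_left₀ (by norm_num) pi_gt_three.le 4]
  rw [le_div_iff₀ (by positivity)]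
  calc 1024 * π ^ 2 * K * (2 * log 3) ≤ 1024 * π ^ 2 * K * (2 * 2) := by gcongr
    _ = K * π ^ 2 * 4096 := by ring
    _ ≤ K * π ^ 2 * (2 + π ^ 4) ^ 2 := by gcongr; nlinarith

/-- Doubling inequality for the measure generated by the Jacobian of a `C¹`
`K`-quasiconformal homeomorphism of the plane:
`∬_{D(z₀,2r)} J(z,φ) ≤ exp{Kπ²(2+π⁴)²/(2 log 3)} ∬_{D(z₀,r)} J(z,φ)`,
equivalently `|φ(D(z₀,2r))| ≤ exp{Kπ²(2+π⁴)²/(2 log 3)}·|φ(D(z₀,r))|`. -/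
theorem jacobian_doubling
    (K : ℝ) (hK : 1 ≤ K) (φ : ℂ → ℂ) (hφ : IsC1QCPlane K φ)
    (z₀ : ℂ) (r : ℝ) (hr : 0 < r) :
    ((∫ z in Metric.ball z₀ (2 * r), (fderiv ℝ φ z).det)
        ≤ Real.exp (K * π ^ 2 * (2 + π ^ 4) ^ 2 / (2 * Real.log 3)) *
          ∫ z in Metric.ball z₀ r, (fderiv ℝ φ z).det) ∧
    volume (φ '' Metric.ball z₀ (2 * r))
        ≤ ENNReal.ofReal (Real.exp (K * π ^ 2 * (2 + π ^ 4) ^ 2 / (2 * Real.log 3))) *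
          volume (φ '' Metric.ball z₀ r) := by
  have volume_doubling : volume (φ '' ball z₀ (2 * r)) ≤
      ENNReal.ofReal (exp (K * π ^ 2 * (2 + π ^ 4) ^ 2 / (2 * log 3))) *
        volume (φ '' ball z₀ r) :=
    (hφ.volume_image_ball_two_mul_le hK z₀ hr.le).trans <| by
      gcongr
      exact doubling_exponent_le hφ.nonneg
  refine ⟨?_, volume_doubling⟩
  rw [hφ.setIntegral_det_fderiv measurableSet_ball, hφ.setIntegral_det_fderiv measurableSet_ball,
    measureReal_def, measureReal_def, ← ENNReal.toReal_ofReal (exp_pos _).le, ← ENNReal.toReal_mul]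
  exact ENNReal.toReal_mono
    (ENNReal.mul_ne_top ENNReal.ofReal_ne_top (hφ.volume_image_ball_ne_top z₀ r)) volume_doubling
end
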